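/- Let d ≥ 1 and let G be a d-circuit with at most d+4 vertices. Then mlt(G) ≥ d+2. -/

import Mathlib

/-!
It suffices to find one generic framework of `G` in `ℝ^d` with a nonzero PSD stress: coordinate
projections keep the framework generic and the stress in equilibrium, so every dimension `≤ d` is
excluded from the set defining `mlt G` (`le_mlt_of_generic_psd`).

Let `S` be the set of non-isolated vertices and write `|S| = d + 1 + k`. The columns of a stress
matrix are affine dependencies of the points. In a circuit every nonzero generic stress is nonzero
on all edges; as `d + 1` generic points are affinely independent, each vertex of `S` misses
at most `k - 1` others (`IsCircuitGraph.card_support`). Hence `k ∈ {1, 2, 3}`. Counting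
dimensions of symmetric forms on the `k`-dimensional space of dependencies, at least
`k (k + 1) / 2 - 1` pairs in `S` are nonadjacent (`IsCircuitGraph.choose_le_card`).

The framework is found near a special, non-generic configuration `p₀`. By Gale duality `p₀` may be
prescribed by vectors `g i ∈ ℝ^k` with zero sum, and then every stress matrix of `p₀` has the form
`g M gᵀ` with `M` symmetric and `g i ⬝ M g j = 0` for nonadjacent `i ≠ j`. If these equations force
`M` to be a multiple of the identity, then the stresses of `p₀` form a line spanned by a PSD matrix
that is definite on the dependencies. Stresses of generic configurations tending to `p₀` then
tend to it after normalisation, and a limit argument shows that they are PSD up to sign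
(`exists_generic_psd`). The PSD condition is not open, but a negative eigenvector of a stress
matrix is itself a dependency, and so is its limit.

It remains to choose the `g i`, which are constant on classes of vertices (`generic_psd_of_template`).
For `k = 1` anything works, and for `k = 2` there are two disjoint nonadjacent pairs. For `k = 3`
the complement of `G` in `S` has maximum degree two and at least five edges. If it contains neither
triangle nor square, its cycles and paths can be wrapped around a pentagon with all five sides
covered, or it has leaves from which paths can be laid end to end around the pentagon
(`exists_label_pentagon`). If it contains a triangle, two further edges complete a template. If it
contains a square, the equations only determine a semidefinite form with one-dimensional kernel;
the kernel is excluded by a closed relation between opposite vertices of the square which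
holds for generic stresses (`generic_psd_square`).
-/

/-!
Common rigidity-theoretic definitions, following the paper
"Computing maximum likelihood thresholds using graph rigidity".
-/

open scoped BigOperators

section Defs

variable {V : Type*}

/-- A configuration in `ℝ^d` is *generic* if the collection of all of its coordinates
is algebraically independent over `ℚ`. -/
def Generic {d : ℕ} (p : V → EuclideanSpace ℝ (Fin d)) : Prop :=
  AlgebraicIndependent ℚ (fun vi : V × Fin d => p vi.1 vi.2)

/-- `ω` is an equilibrium stress of the framework `(G, p)`: it is symmetric, supported on
the edges of `G`, and satisfies the equilibrium condition at every vertex. -/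
def IsEqStress [Fintype V] (G : SimpleGraph V) {d : ℕ}
    (p : V → EuclideanSpace ℝ (Fin d)) (ω : V → V → ℝ) : Prop :=
  (∀ i j, ω i j = ω j i) ∧
  (∀ i j, ¬ G.Adj i j → ω i j = 0) ∧
  (∀ i, ∑ j, ω i j • (p j - p i) = 0)

/-- The stress matrix associated to a stress `ω`:  off-diagonal entries are `-ω i j`
(which vanish off the edges of the graph) and the diagonal entry at `i` is `∑ k, ω i k`. -/
def stressMatrix [Fintype V] [DecidableEq V] (ω : V → V → ℝ) : Matrix V V ℝ :=
  fun i j => if i = j then ∑ k, ω i k else - ω i j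

/-- The maximum likelihood threshold of `G` (via its rigidity-theoretic characterization):
`d + 1` where `d` is the smallest dimension in which no generic framework `(G, p)` supports
a nonzero PSD equilibrium stress. -/
noncomputable def mlt [Fintype V] [DecidableEq V] (G : SimpleGraph V) : ℕ :=
  sInf {d : ℕ | ∀ p : V → EuclideanSpace ℝ (Fin d), Generic p →
    ∀ ω : V → V → ℝ, IsEqStress G p ω → (stressMatrix ω).PosSemidef → ω = 0} + 1

/-- The generic completion rank of `G`: `d + 1` where `d` is the smallest dimension in
which no generic framework `(G, p)` supports a nonzero equilibrium stress. -/
noncomputable def gcr [Fintype V] (G : SimpleGraph V) : ℕ :=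
  sInf {d : ℕ | ∀ p : V → EuclideanSpace ℝ (Fin d), Generic p →
    ∀ ω : V → V → ℝ, IsEqStress G p ω → ω = 0} + 1

/-- Two frameworks `(G, p)` and `(G, q)` are equivalent: corresponding edge lengths agree. -/
def FrameworkEquiv {d : ℕ} (G : SimpleGraph V) (p q : V → EuclideanSpace ℝ (Fin d)) : Prop :=
  ∀ ⦃u v⦄, G.Adj u v → dist (p u) (p v) = dist (q u) (q v)

/-- Two configurations are congruent: related by a Euclidean isometry of `ℝ^d`. -/
def FrameworkCongruent {d : ℕ} (p q : V → EuclideanSpace ℝ (Fin d)) : Prop :=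
  ∃ T : EuclideanSpace ℝ (Fin d) → EuclideanSpace ℝ (Fin d), Isometry T ∧ q = T ∘ p

/-- A framework is globally rigid if every equivalent framework is congruent to it. -/
def GloballyRigidFramework {d : ℕ} (G : SimpleGraph V)
    (p : V → EuclideanSpace ℝ (Fin d)) : Prop :=
  ∀ q : V → EuclideanSpace ℝ (Fin d), FrameworkEquiv G p q → FrameworkCongruent p q

/-- A framework is rigid if every equivalent framework in some neighborhood of `p`
is congruent to it. -/
def RigidFramework {d : ℕ} (G : SimpleGraph V)
    (p : V → EuclideanSpace ℝ (Fin d)) : Prop :=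
  ∃ U ∈ nhds p, ∀ q ∈ U, FrameworkEquiv G p q → FrameworkCongruent p q

/-- A graph is `d`-rigid if every generic framework in `ℝ^d` is rigid. -/
def IsRigidGraph (d : ℕ) (G : SimpleGraph V) : Prop :=
  ∀ p : V → EuclideanSpace ℝ (Fin d), Generic p → RigidFramework G p

/-- A graph is globally `d`-rigid if every generic framework in `ℝ^d` is globally rigid. -/
def IsGloballyRigidGraph (d : ℕ) (G : SimpleGraph V) : Prop :=
  ∀ p : V → EuclideanSpace ℝ (Fin d), Generic p → GloballyRigidFramework G p

/-- A graph is `d`-independent if the rows of the rigidity matrix `R(G, p)` are linearly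
independent for every generic `p`; equivalently (linear dependencies among the rows of
the rigidity matrix are exactly the equilibrium stresses), no generic framework in `ℝ^d`
supports a nonzero equilibrium stress. -/
def IsIndepGraph [Fintype V] (d : ℕ) (G : SimpleGraph V) : Prop :=
  ∀ p : V → EuclideanSpace ℝ (Fin d), Generic p →
    ∀ ω : V → V → ℝ, IsEqStress G p ω → ω = 0

/-- A graph is a `d`-circuit if it is not `d`-independent but every proper subgraph is. -/
def IsCircuitGraph [Fintype V] (d : ℕ) (G : SimpleGraph V) : Prop :=
  ¬ IsIndepGraph d G ∧ ∀ H : SimpleGraph V, H < G → IsIndepGraph d H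

/-- Vertex connectivity at least `k`: more than `k` vertices, and removing any fewer
than `k` vertices leaves a connected graph. -/
def IsKConnected [Fintype V] (k : ℕ) (G : SimpleGraph V) : Prop :=
  k < Fintype.card V ∧ ∀ S : Set V, S.ncard < k → (G.induce Sᶜ).Connected

/-- `i(X)`: the number of edges of `G` with both endpoints in `X`. -/
noncomputable def edgesWithin (G : SimpleGraph V) (X : Set V) : ℕ :=
  {e ∈ G.edgeSet | ∀ v ∈ e, v ∈ X}.ncard

/-- `d(X, Y)`: the number of edges of `G` with one endpoint in `X \ Y` and the other
in `Y \ X`. -/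
noncomputable def crossEdges (G : SimpleGraph V) (X Y : Set V) : ℕ :=
  {e ∈ G.edgeSet | ∃ u ∈ X \ Y, ∃ v ∈ Y \ X, e = s(u, v)}.ncard

/-- `G` is `(3,6)`-sparse. -/
def Sparse36 (G : SimpleGraph V) : Prop :=
  ∀ X : Set V, 3 ≤ X.ncard → edgesWithin G X ≤ 3 * X.ncard - 6

/-- `X` is 3-critical in `G`. -/
def ThreeCritical (G : SimpleGraph V) (X : Set V) : Prop :=
  3 ≤ X.ncard ∧ edgesWithin G X = 3 * X.ncard - 6

/-- `G'` (on vertex set `Option V`, with new vertex `none`) is a `d`-dimensional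
1-extension of `G`: an edge `xy` of `G` is deleted and the new vertex is joined to
`x`, `y` and `d - 1` further vertices. -/
def IsOneExtension [DecidableEq V] (d : ℕ) (G : SimpleGraph V)
    (G' : SimpleGraph (Option V)) : Prop :=
  ∃ (x y : V) (D : Finset V), G.Adj x y ∧ x ∉ D ∧ y ∉ D ∧ D.card = d - 1 ∧
    (∀ u v : V, G'.Adj (some u) (some v) ↔
      (G.Adj u v ∧ ¬((u = x ∧ v = y) ∨ (u = y ∧ v = x)))) ∧
    (∀ u : V, G'.Adj (some u) none ↔ (u = x ∨ u = y ∨ u ∈ D))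

end Defs

/-! ### Generic points -/

/-- A matrix of rational polynomials that has a nontrivial kernel at one generic point has a
nontrivial kernel at every point: both are governed by the Gram determinant `det (PᵀP)`, a
rational polynomial. -/
lemma kernel_transfer {σ m n : Type*} [Fintype m] [Fintype n]
    (P : Matrix m n (MvPolynomial σ ℚ)) (a b : σ → ℝ) (ha : AlgebraicIndependent ℚ a)
    (h : ∃ v ≠ 0, (P.map (MvPolynomial.aeval a)).mulVec v = 0) :
    ∃ v ≠ 0, (P.map (MvPolynomial.aeval b)).mulVec v = 0 := by
  classical
  have key : ∀ c : σ → ℝ, (∃ v ≠ 0, (P.map (MvPolynomial.aeval c)).mulVec v = 0) ↔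
      MvPolynomial.aeval c (P.transpose * P).det = 0 := by
    intro c
    have h1 : MvPolynomial.aeval c (P.transpose * P).det
        = ((P.map (MvPolynomial.aeval c)).conjTranspose * P.map (MvPolynomial.aeval c)).det := by
      rw [AlgHom.map_det, AlgHom.mapMatrix_apply, Matrix.map_mul]
      congr 1
    rw [h1, ← Matrix.exists_mulVec_eq_zero_iff]
    simp only [Matrix.conjTranspose_mul_self_mulVec_eq_zero]
  rw [key] at h ⊢
  rw [ha.eq_zero_of_aeval_eq_zero _ h, map_zero]

/-- `ℝ` is uncountable, so its transcendence degree over `ℚ` is infinite. -/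
lemma exists_algebraicIndependent (ι : Type*) [Finite ι] :
    ∃ t : ι → ℝ, AlgebraicIndependent ℚ t := by
  obtain ⟨s, hs⟩ := exists_isTranscendenceBasis ℚ ℝ
  have hinf : Infinite s := by
    by_contra hfin
    rw [not_infinite_iff_finite] at hfin
    have := hs.isAlgebraic
    have h1 := Algebra.IsAlgebraic.cardinalMk_le_max
      (Algebra.adjoin ℚ (Set.range ((↑) : s → ℝ))) ℝ
    have h2 : Cardinal.mk (Algebra.adjoin ℚ (Set.range ((↑) : s → ℝ))) ≤ Cardinal.aleph0 := by
      rw [← Cardinal.mk_congr hs.1.aevalEquiv.toEquiv]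
      refine MvPolynomial.cardinalMk_le_max.trans ?_
      simp
    have h3 := h1.trans (max_le h2 le_rfl)
    rw [Cardinal.mk_real] at h3
    exact absurd h3 (not_le.mpr Cardinal.aleph0_lt_continuum)
  have : Fintype ι := Fintype.ofFinite ι
  obtain ⟨e⟩ : Nonempty (ι ↪ s) := by
    have e1 := Infinite.natEmbedding s
    have e2 : ι ↪ ℕ := (Fintype.equivFin ι).toEmbedding.trans Fin.valEmbedding
    exact ⟨e2.trans e1⟩
  exact ⟨fun i => (e i : ℝ), hs.1.comp e e.injective⟩

/-- Generic configurations are dense: rescale an algebraically independent family by a small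
rational and translate it by a rational vector. -/
lemma exists_generic_near {V : Type*} [Fintype V] {d : ℕ}
    (p₀ : V → EuclideanSpace ℝ (Fin d)) {U : Set (V → EuclideanSpace ℝ (Fin d))}
    (hU : U ∈ nhds p₀) : ∃ p ∈ U, Generic p := by
  classical
  obtain ⟨t, ht⟩ := exists_algebraicIndependent (V × Fin d)
  -- the map from coordinate arrays to configurations
  let F : (V × Fin d → ℝ) → (V → EuclideanSpace ℝ (Fin d)) :=
    fun x i => WithLp.toLp 2 (fun r => x (i, r))
  have hF : Continuous F := by fun_prop
  have hF0 : F (fun z => p₀ z.1 z.2) = p₀ := rfl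
  obtain ⟨q, hq⟩ : ∃ q : V × Fin d → ℚ, F ⁻¹' interior U ∈ nhds (fun z => (q z : ℝ)) := by
    have hdense : DenseRange (fun q : V × Fin d → ℚ => fun z => ((q z : ℚ) : ℝ)) :=
      DenseRange.piMap (fun _ => Rat.denseRange_cast)
    have hne : (F ⁻¹' interior U).Nonempty := ⟨fun z => p₀ z.1 z.2, by
      rw [Set.mem_preimage, hF0]; exact mem_interior_iff_mem_nhds.2 hU⟩
    have ho : IsOpen (F ⁻¹' interior U) := isOpen_interior.preimage hF
    obtain ⟨q, hq⟩ := hdense.exists_mem_open ho hne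
    exact ⟨q, ho.mem_nhds hq⟩
  have hlim : Filter.Tendsto (fun n : ℕ => fun z => (q z : ℝ) + (((1 : ℚ) / (n + 1) : ℚ) : ℝ) * t z)
      Filter.atTop (nhds (fun z => (q z : ℝ))) := by
    rw [tendsto_pi_nhds]
    intro z
    have h0 := tendsto_one_div_add_atTop_nhds_zero_nat (𝕜 := ℝ)
    have := (h0.mul_const (t z)).const_add (q z : ℝ)
    simpa using this
  obtain ⟨n, hn⟩ := (hlim.eventually hq).exists
  refine ⟨_, interior_subset hn, ?_⟩
  have hr : ((1 : ℚ) / (n + 1) : ℚ) ≠ 0 := by positivity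
  generalize ((1 : ℚ) / (n + 1) : ℚ) = r at hn hr
  have hf : AlgebraicIndependent ℚ
      (fun z : V × Fin d => MvPolynomial.C (q z) + MvPolynomial.C r * MvPolynomial.X z) := by
    rw [algebraicIndependent_iff_injective_aeval]
    have hli : Function.LeftInverse
        (MvPolynomial.aeval (fun z : V × Fin d =>
          MvPolynomial.C r⁻¹ * (MvPolynomial.X z - MvPolynomial.C (q z)) :
            V × Fin d → MvPolynomial (V × Fin d) ℚ))
        (MvPolynomial.aeval (fun z : V × Fin d =>
          MvPolynomial.C (q z) + MvPolynomial.C r * MvPolynomial.X z)) := by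
      intro P
      rw [← AlgHom.comp_apply]
      conv_rhs => rw [← AlgHom.id_apply (R := ℚ) P]
      congr 1
      apply MvPolynomial.algHom_ext
      intro z
      simp only [AlgHom.comp_apply, MvPolynomial.aeval_X, map_add, map_mul, AlgHom.id_apply]
      rw [MvPolynomial.algHom_C, MvPolynomial.algHom_C, ← mul_assoc,
        MvPolynomial.algebraMap_eq, ← MvPolynomial.C_mul, mul_inv_cancel₀ hr]
      simp
    exact hli.injective
  have := ht.aeval_of_algebraicIndependent hf
  unfold Generic
  convert this using 2 with z
  simp [F]

/-! ### Affine dependencies and stress matrices -/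

/-- `v` is an affine dependency of the points `p`, supported on `S`: it vanishes off `S`,
`∑ v i = 0` and `∑ v i • p i = 0` (the last condition is written in coordinates). -/
def Dep {V : Type*} [Fintype V] {d : ℕ} (S : Finset V) (p : V → EuclideanSpace ℝ (Fin d))
    (v : V → ℝ) : Prop :=
  (∀ i, i ∉ S → v i = 0) ∧ ∑ i, v i = 0 ∧ ∀ r, ∑ i, v i * p i r = 0

/-- At most `D + 1` generic points of `ℝ^D` are affinely independent. By `kernel_transfer` it
suffices to look at the vertices of a simplex. -/
lemma dep_eq_zero {V : Type*} [Fintype V] {D : ℕ} {p : V → EuclideanSpace ℝ (Fin D)}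
    (hp : Generic p) {T : Finset V} (hT : T.card ≤ D + 1) {v : V → ℝ} (hv : Dep T p v) :
    v = 0 := by
  classical
  by_contra hne
  -- the linear system defining `Dep T`
  let P : Matrix (V ⊕ (Unit ⊕ Fin D)) V (MvPolynomial (V × Fin D) ℚ) := Matrix.of fun x j =>
    Sum.elim (fun i => if i = j ∧ i ∉ T then 1 else 0)
      (Sum.elim (fun _ => 1) (fun r => MvPolynomial.X (j, r))) x
  have key : ∀ (q : V → EuclideanSpace ℝ (Fin D)) (w : V → ℝ),
      (P.map (MvPolynomial.aeval (fun z : V × Fin D => q z.1 z.2))).mulVec w = 0 ↔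
        Dep T q w := by
    intro q w
    constructor
    · intro h
      refine ⟨fun i hi => ?_, ?_, fun r => ?_⟩
      · have := congrFun h (Sum.inl i)
        simpa [P, Matrix.mulVec, dotProduct, hi, apply_ite] using this
      · have := congrFun h (Sum.inr (Sum.inl ()))
        simpa [P, Matrix.mulVec, dotProduct] using this
      · have := congrFun h (Sum.inr (Sum.inr r))
        simpa [P, Matrix.mulVec, dotProduct, mul_comm] using this
    · rintro ⟨h1, h2, h3⟩
      ext x
      rcases x with i | _ | r
      · by_cases hi : i ∈ T
        · simp [P, Matrix.mulVec, dotProduct, hi]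
        · simpa [P, Matrix.mulVec, dotProduct, hi, apply_ite] using h1 i hi
      · simpa [P, Matrix.mulVec, dotProduct] using h2
      · simpa [P, Matrix.mulVec, dotProduct, mul_comm] using h3 r
  obtain ⟨e⟩ : Nonempty (T ↪ Fin (D + 1)) := by
    apply Function.Embedding.nonempty_of_card_le
    simpa using hT
  let q : V → EuclideanSpace ℝ (Fin D) := fun i => WithLp.toLp 2 (fun r =>
    if h : i ∈ T then (if e ⟨i, h⟩ = r.castSucc then 1 else 0) else 0)
  obtain ⟨w, hw0, hw⟩ := kernel_transfer P _ (fun z => q z.1 z.2) hp ⟨v, hne, (key p v).2 hv⟩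
  obtain ⟨h1, h2, h3⟩ := (key q w).1 hw
  have h4 : ∀ i (h : i ∈ T), e ⟨i, h⟩ ≠ Fin.last D → w i = 0 := by
    intro i h hl
    obtain ⟨r, hr⟩ := Fin.exists_castSucc_eq.2 hl
    have := h3 r
    rw [Finset.sum_eq_single i] at this
    · simpa [q, h, hr] using this
    · intro b _ hb
      by_cases hbT : b ∈ T
      · have : e ⟨b, hbT⟩ ≠ r.castSucc := by
          rw [hr]; intro h'
          exact hb (congrArg Subtype.val (e.injective h'))
        simp [q, hbT, this]
      · simp [h1 b hbT]
    · simp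
  apply hw0
  ext i
  by_cases hi : i ∈ T
  · by_cases hl : e ⟨i, hi⟩ = Fin.last D
    · rw [Finset.sum_eq_single i] at h2
      · exact h2
      · intro b _ hb
        by_cases hbT : b ∈ T
        · apply h4 b hbT
          intro h'
          exact hb (congrArg Subtype.val (e.injective (h'.trans hl.symm)))
        · exact h1 b hbT
      · simp
    · exact h4 i hi hl
  · exact h1 i hi

/-- Having a nonzero stress at one generic configuration forces one at every configuration. -/
lemma exists_stress_everywhere {V : Type*} [Fintype V] {d : ℕ} {G : SimpleGraph V}
    (h : ¬ IsIndepGraph d G) (q : V → EuclideanSpace ℝ (Fin d)) :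
    ∃ ω, IsEqStress G q ω ∧ ω ≠ 0 := by
  classical
  unfold IsIndepGraph at h
  push Not at h
  obtain ⟨p, hp, ω, hω, hω0⟩ := h
  -- the linear system defining `IsEqStress`
  let P : Matrix ((V × V) ⊕ ((V × V) ⊕ (V × Fin d))) (V × V) (MvPolynomial (V × Fin d) ℚ) :=
    Matrix.of fun x e => Sum.elim (fun y => (if y = e then 1 else 0) - (if y.swap = e then 1 else 0))
      (Sum.elim (fun y => if y = e ∧ ¬ G.Adj y.1 y.2 then 1 else 0)
        (fun y => if y.1 = e.1 then MvPolynomial.X (e.2, y.2) - MvPolynomial.X (e.1, y.2)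
          else 0)) x
  have key : ∀ (q : V → EuclideanSpace ℝ (Fin d)) (w : V × V → ℝ),
      (P.map (MvPolynomial.aeval (fun z : V × Fin d => q z.1 z.2))).mulVec w = 0 ↔
        IsEqStress G q (fun i j => w (i, j)) := by
    intro q w
    have hr : ∀ i r, (∑ j, w (i, j) • (q j - q i)) r
        = ∑ j, w (i, j) * (q j r - q i r) := by
      intro i r; simp
    have e1 : ∀ y, (P.map (MvPolynomial.aeval (fun z : V × Fin d => q z.1 z.2))).mulVec w
        (Sum.inl y) = w y - w y.swap := by
      intro y
      simp only [P, Matrix.mulVec, dotProduct, Matrix.map_apply, Matrix.of_apply, Sum.elim_inl,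
        map_sub, sub_mul, Finset.sum_sub_distrib]
      congr 1
      · rw [Finset.sum_eq_single y] <;> simp +contextual [eq_comm]
      · rw [Finset.sum_eq_single y.swap] <;> simp +contextual [eq_comm]
    have e2 : ∀ y, (P.map (MvPolynomial.aeval (fun z : V × Fin d => q z.1 z.2))).mulVec w
        (Sum.inr (Sum.inl y)) = if G.Adj y.1 y.2 then 0 else w y := by
      intro y
      simp only [P, Matrix.mulVec, dotProduct, Matrix.map_apply, Matrix.of_apply, Sum.elim_inl,
        Sum.elim_inr]
      by_cases hy : G.Adj y.1 y.2
      · simp [hy]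
      · rw [Finset.sum_eq_single y] <;> simp +contextual [hy, eq_comm]
    have e3 : ∀ i r, (P.map (MvPolynomial.aeval (fun z : V × Fin d => q z.1 z.2))).mulVec w
        (Sum.inr (Sum.inr (i, r))) = ∑ j, w (i, j) * (q j r - q i r) := by
      intro i r
      simp only [P, Matrix.mulVec, dotProduct, Matrix.map_apply, Matrix.of_apply, Sum.elim_inr]
      rw [Fintype.sum_prod_type, Finset.sum_eq_single i]
      · simp [mul_comm]
      · intro b _ hb
        simp [hb.symm]
      · simp
    constructor
    · intro h
      refine ⟨fun i j => ?_, fun i j hij => ?_, fun i => ?_⟩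
      · have := (e1 (i, j)).symm.trans (congrFun h _)
        simpa [sub_eq_zero] using this
      · have := (e2 (i, j)).symm.trans (congrFun h _)
        simpa [hij] using this
      · ext r
        rw [hr]
        exact (e3 i r).symm.trans (congrFun h _)
    · rintro ⟨h1, h2, h3⟩
      ext x
      rcases x with ⟨i, j⟩ | ⟨i, j⟩ | ⟨i, r⟩
      · rw [e1]; simpa [sub_eq_zero] using h1 i j
      · rw [e2]
        by_cases hij : G.Adj i j
        · simp [hij]
        · simpa [hij] using h2 i j hij
      · rw [e3, ← hr, h3]; rfl
  obtain ⟨w, hw0, hw⟩ := kernel_transfer P _ (fun z => q z.1 z.2) hp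
    ⟨fun z => ω z.1 z.2, fun h0 => hω0 (by ext i j; exact congrFun h0 (i, j)), (key p _).2 hω⟩
  refine ⟨_, (key q w).1 hw, fun h0 => hw0 ?_⟩
  ext ⟨i, j⟩
  exact congrFun (congrFun h0 i) j

lemma IsEqStress.smul {V : Type*} [Fintype V] {d : ℕ} {G : SimpleGraph V}
    {p : V → EuclideanSpace ℝ (Fin d)} {ω : V → V → ℝ} (h : IsEqStress G p ω) (c : ℝ) : IsEqStress G p (c • ω) := by
  refine ⟨fun i j => ?_, fun i j hij => ?_, fun i => ?_⟩
  · simp [h.1 i j]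
  · simp [h.2.1 i j hij]
  · have := h.2.2 i
    simp only [Pi.smul_apply, smul_eq_mul, mul_smul, ← Finset.smul_sum, this, smul_zero]

section Stress

variable {V : Type*} [Fintype V] [DecidableEq V] {d : ℕ} {G : SimpleGraph V}
  {p : V → EuclideanSpace ℝ (Fin d)} {ω : V → V → ℝ}

lemma stressMatrix_symm (h : IsEqStress G p ω) (i j : V) :
    stressMatrix ω i j = stressMatrix ω j i := by
  by_cases hij : i = j
  · rw [hij]
  · simp [stressMatrix, hij, Ne.symm hij, h.1 i j]

lemma stressMatrix_of_ne {i j : V} (hij : i ≠ j) : stressMatrix ω i j = - ω i j := by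
  simp [stressMatrix, hij]

lemma stressMatrix_apply_of_not_adj (h : IsEqStress G p ω) {i j : V} (hij : i ≠ j)
    (hG : ¬ G.Adj i j) : stressMatrix ω i j = 0 := by
  rw [stressMatrix_of_ne hij, h.2.1 i j hG, neg_zero]

lemma stressMatrix_sum (h : IsEqStress G p ω) (j : V) (x : V → ℝ) :
    ∑ i, stressMatrix ω i j * x i = ∑ k, ω j k * (x j - x k) := by
  have h0 : ω j j = 0 := h.2.1 j j (G.loopless.irrefl j)
  have : ∀ i, stressMatrix ω i j * x i
      = (if i = j then (∑ k, ω j k) * x j else 0) - ω j i * x i := by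
    intro i
    by_cases hij : i = j
    · subst hij; simp [stressMatrix, h0]
    · simp [stressMatrix, hij, h.1 j i]
  simp [this, mul_sub, Finset.sum_sub_distrib, Finset.sum_mul]

/-- The columns of a stress matrix are affine dependencies. -/
lemma stressMatrix_dep (h : IsEqStress G p ω) {T : Finset V} {j : V}
    (hT : ∀ i, i ∉ T → stressMatrix ω i j = 0) : Dep T p (fun i => stressMatrix ω i j) := by
  refine ⟨hT, ?_, fun r => ?_⟩
  · simpa using stressMatrix_sum h j (fun _ => 1)
  · rw [stressMatrix_sum h j (fun i => p i r)]
    have := congrArg (fun x : EuclideanSpace ℝ (Fin d) => x r) (h.2.2 j)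
    simp only [PiLp.zero_apply, WithLp.ofLp_sum, WithLp.ofLp_smul, WithLp.ofLp_sub,
      Finset.sum_apply, Pi.smul_apply, Pi.sub_apply, smul_eq_mul] at this
    rw [← neg_eq_zero, ← this, ← Finset.sum_neg_distrib]
    exact Finset.sum_congr rfl fun k _ => by ring

lemma stressMatrix_support (h : IsEqStress G p ω) {S : Finset V}
    (hS : ∀ i j, G.Adj i j → i ∈ S) {i : V} (hi : i ∉ S) (j : V) :
    stressMatrix ω i j = 0 := by
  by_cases hij : i = j
  · subst hij
    simp only [stressMatrix, if_true]
    exact Finset.sum_eq_zero fun k _ => h.2.1 _ _ fun hk => hi (hS _ _ hk)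
  · exact stressMatrix_apply_of_not_adj h hij fun hk => hi (hS _ _ hk)

lemma eq_zero_of_stressMatrix (h : IsEqStress G p ω) (h0 : stressMatrix ω = 0) : ω = 0 := by
  ext i j
  by_cases hij : i = j
  · subst hij; exact h.2.1 i i (G.loopless.irrefl i)
  · have := congrFun (congrFun h0 i) j
    rw [stressMatrix_of_ne hij] at this
    simpa using this

lemma stressMatrix_smul (c : ℝ) : stressMatrix (c • ω) = c • stressMatrix ω := by
  ext i j
  by_cases hij : i = j <;> simp [stressMatrix, hij, Finset.mul_sum]

/-- A symmetric matrix supported on `G` whose columns are affine dependencies of `p` is the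
stress matrix of a stress of `(G, p)`. -/
lemma exists_stress_of_matrix {A : Matrix V V ℝ} (hA : ∀ i j, A i j = A j i)
    (hG : ∀ i j, i ≠ j → ¬ G.Adj i j → A i j = 0) {S : Finset V}
    (hdep : ∀ j, Dep S p (fun i => A i j)) :
    ∃ ω, IsEqStress G p ω ∧ stressMatrix ω = A := by
  let ω : V → V → ℝ := fun i j => if i = j then 0 else - A i j
  have hsum : ∀ (i : V) (x : V → ℝ), ∑ j, ω i j * x j = A i i * x i - ∑ j, A j i * x j := by
    intro i x
    have : ∀ j, ω i j * x j = (if i = j then A i i * x i else 0) - A j i * x j := by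
      intro j
      by_cases hij : i = j
      · subst hij; simp [ω]
      · simp [ω, hij, hA i j]
    simp [this, Finset.sum_sub_distrib]
  have hsum1 : ∀ i, ∑ j, ω i j = A i i := by
    intro i
    simpa [(hdep i).2.1] using hsum i (fun _ => 1)
  refine ⟨ω, ⟨fun i j => ?_, fun i j hij => ?_, fun i => ?_⟩, ?_⟩
  · simp [ω, hA i j, eq_comm]
  · by_cases h : i = j
    · simp [ω, h]
    · simp [ω, h, hG i j h hij]
  · ext r
    simp only [PiLp.zero_apply, WithLp.ofLp_sum, WithLp.ofLp_smul, WithLp.ofLp_sub,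
      Finset.sum_apply, Pi.smul_apply, Pi.sub_apply, smul_eq_mul]
    rw [Finset.sum_congr rfl fun j _ => mul_sub _ _ _, Finset.sum_sub_distrib,
      ← Finset.sum_mul, hsum i (fun j => p j r), hsum1, (hdep i).2.2 r]
    ring
  · ext i j
    by_cases hij : i = j
    · subst hij; simp [stressMatrix, hsum1]
    · simp [stressMatrix, ω, hij]

end Stress

/-- Genericity passes to the projection on the first `D` coordinates. -/
lemma Generic.proj {V : Type*} {d D : ℕ} {p : V → EuclideanSpace ℝ (Fin d)} (hp : Generic p)
    (hle : D ≤ d) : Generic (fun i => (WithLp.toLp 2 (fun r => p i (Fin.castLE hle r)) :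
      EuclideanSpace ℝ (Fin D))) := by
  have hinj : Function.Injective (fun z : V × Fin D => (z.1, Fin.castLE hle z.2)) := by
    rintro ⟨i, r⟩ ⟨j, s⟩ h
    simp only [Prod.mk.injEq, Fin.castLE_inj] at h
    rw [h.1, h.2]
  have h := AlgebraicIndependent.comp (x := fun vi : V × Fin d => p vi.1 vi.2) hp _ hinj
  unfold Generic
  convert h using 2
  simp

/-- A generic framework in `ℝ^d` with a nonzero PSD stress projects to generic frameworks with
the same stress in all smaller dimensions, so it bounds `mlt` from below. The dimension
`card V`, in which generic points are affinely independent, shows that the set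
in the definition of `mlt` is nonempty. -/
lemma le_mlt_of_generic_psd {V : Type*} [Fintype V] [DecidableEq V] {d : ℕ} {G : SimpleGraph V}
    {p : V → EuclideanSpace ℝ (Fin d)} (hp : Generic p) {ω : V → V → ℝ}
    (hω : IsEqStress G p ω) (hpsd : (stressMatrix ω).PosSemidef) (h0 : ω ≠ 0) :
    d + 2 ≤ mlt G := by
  unfold mlt
  have hne : {d : ℕ | ∀ p : V → EuclideanSpace ℝ (Fin d), Generic p →
    ∀ ω : V → V → ℝ, IsEqStress G p ω → (stressMatrix ω).PosSemidef → ω = 0}.Nonempty := by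
    refine ⟨Fintype.card V, fun q hq η hη _ => eq_zero_of_stressMatrix hη ?_⟩
    ext i j
    have hcard : (Finset.univ : Finset V).card ≤ Fintype.card V + 1 := by
      rw [Finset.card_univ]; omega
    exact congrFun (dep_eq_zero hq hcard (stressMatrix_dep hη (j := j) (by simp))) i
  have hmem := Nat.sInf_mem hne
  revert hmem
  generalize sInf {d : ℕ | ∀ p : V → EuclideanSpace ℝ (Fin d), Generic p →
    ∀ ω : V → V → ℝ, IsEqStress G p ω → (stressMatrix ω).PosSemidef → ω = 0} = D
  intro hmem
  have hlt : d < D := by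
    by_contra hle
    push Not at hle
    refine h0 (hmem _ (hp.proj hle) ω ⟨hω.1, hω.2.1, fun i => ?_⟩ hpsd)
    ext r
    have := congrArg (fun x : EuclideanSpace ℝ (Fin d) => x (Fin.castLE hle r)) (hω.2.2 i)
    simpa using this
  omega

/-! ### Perturbation to a generic configuration -/

lemma stressMatrix_mulVec_dep {V : Type*} [Fintype V] [DecidableEq V] {d : ℕ}
    {G : SimpleGraph V} {p : V → EuclideanSpace ℝ (Fin d)} {ω : V → V → ℝ} {S : Finset V}
    (hS : ∀ i j, G.Adj i j → i ∈ S) (h : IsEqStress G p ω) (w : V → ℝ) :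
    Dep S p ((stressMatrix ω).mulVec w) := by
  have hd := fun j => stressMatrix_dep h (T := S) (j := j)
    fun i hi => stressMatrix_support h hS hi j
  refine ⟨fun i hi => ?_, ?_, fun r => ?_⟩
  · refine Finset.sum_eq_zero fun j _ => ?_
    have := stressMatrix_support h hS hi j
    exact mul_eq_zero_of_left this _
  · simp only [Matrix.mulVec, dotProduct]
    rw [Finset.sum_comm]
    exact Finset.sum_eq_zero fun j _ => by rw [← Finset.sum_mul, (hd j).2.1, zero_mul]
  · simp only [Matrix.mulVec, dotProduct, Finset.sum_mul]
    rw [Finset.sum_comm]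
    refine Finset.sum_eq_zero fun j _ => ?_
    have := congrArg (· * w j) ((hd j).2.2 r)
    simp only [Finset.sum_mul, zero_mul] at this
    rw [← this]
    exact Finset.sum_congr rfl fun i _ => by ring

/-- If a stress matrix is not PSD, a normalised eigenvector for a negative eigenvalue lies in
its range. -/
lemma exists_neg_vector {V : Type*} [Fintype V] [DecidableEq V] {d : ℕ}
    {G : SimpleGraph V} {p : V → EuclideanSpace ℝ (Fin d)} {ω : V → V → ℝ}
    (h : IsEqStress G p ω) (hpsd : ¬ (stressMatrix ω).PosSemidef) :
    ∃ w, ‖(stressMatrix ω).mulVec w‖ = 1 ∧ (stressMatrix ω).mulVec w ⬝ᵥ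
      (stressMatrix ω).mulVec ((stressMatrix ω).mulVec w) ≤ 0 := by
  have hH : (stressMatrix ω).IsHermitian := by
    ext i j
    simpa using stressMatrix_symm h j i
  rw [hH.posSemidef_iff_eigenvalues_nonneg, Pi.le_def] at hpsd
  push Not at hpsd
  obtain ⟨k, hk⟩ := hpsd
  have he := hH.mulVec_eigenvectorBasis k
  set e : V → ℝ := (hH.eigenvectorBasis k).ofLp with he'
  have he0 : e ≠ 0 := by
    intro h0
    exact hH.eigenvectorBasis.orthonormal.ne_zero k (by ext i; exact congrFun h0 i)
  set l := hH.eigenvalues k with hl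
  have hl0 : l < 0 := hk
  have hn : 0 < ‖e‖ := norm_pos_iff.2 he0
  have hu : (stressMatrix ω).mulVec ((l⁻¹ * ‖e‖⁻¹) • e) = ‖e‖⁻¹ • e := by
    rw [Matrix.mulVec_smul, he, smul_smul]
    congr 1
    field_simp [hl0.ne]
  refine ⟨(l⁻¹ * ‖e‖⁻¹) • e, ?_, ?_⟩
  · rw [hu, norm_smul, norm_inv, norm_norm, inv_mul_cancel₀ hn.ne']
  · rw [hu, Matrix.mulVec_smul, he, smul_dotProduct, dotProduct_smul, dotProduct_smul]
    have h1 : 0 ≤ e ⬝ᵥ e := Finset.sum_nonneg fun i _ => mul_self_nonneg _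
    have h2 : 0 < ‖e‖⁻¹ := inv_pos.2 hn
    simp only [smul_eq_mul]
    have : ‖e‖⁻¹ * (‖e‖⁻¹ * (l * e ⬝ᵥ e)) = l * ((‖e‖⁻¹ * ‖e‖⁻¹) * (e ⬝ᵥ e)) := by ring
    rw [this]
    exact mul_nonpos_of_nonpos_of_nonneg hl0.le (by positivity)

/-- A configuration, a stress of norm one and two vectors of norm one. -/
abbrev LimitData (V : Type*) [Fintype V] (d : ℕ) : Type _ :=
  (V → EuclideanSpace ℝ (Fin d)) × (Metric.sphere (0 : V → V → ℝ) 1 ×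
      Metric.sphere (0 : V → ℝ) 1 × Metric.sphere (0 : V → ℝ) 1)

/-- The limit argument. Suppose that the stresses of `(G, p₀)` are the multiples of `Ω₀`, and
that `Ω₀` is definite enough on the dependencies of `p₀` satisfying a closed condition `Φ` which
holds on the ranges of generic stress matrices. If no generic configuration had a nonzero
PSD stress, then both signs of every generic stress would have negative eigenvectors in the
range; by compactness these survive in the limit `p₀`, for both signs, which is impossible. -/
lemma exists_generic_psd {V : Type*} [Fintype V] [DecidableEq V] {d : ℕ}
    {G : SimpleGraph V} {S : Finset V} {p₀ : V → EuclideanSpace ℝ (Fin d)} {Ω₀ : Matrix V V ℝ}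
    (hS : ∀ i j, G.Adj i j → i ∈ S) (hind : ¬ IsIndepGraph d G)
    (Φ : Set (Matrix V V ℝ × (V → ℝ))) (hΦc : IsClosed Φ)
    (hΦ : ∀ p : V → EuclideanSpace ℝ (Fin d), Generic p → ∀ ω, IsEqStress G p ω → ∀ w,
      (stressMatrix ω, (stressMatrix ω).mulVec w) ∈ Φ)
    (h1 : ∀ ω, IsEqStress G p₀ ω → ∃ c : ℝ, stressMatrix ω = c • Ω₀)
    (hdef : ∀ c : ℝ, c ≠ 0 → ∀ v, Dep S p₀ v → (c • Ω₀, v) ∈ Φ → v ⬝ᵥ Ω₀.mulVec v ≤ 0 → v = 0) :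
    ∃ p : V → EuclideanSpace ℝ (Fin d), Generic p ∧
      ∃ ω, IsEqStress G p ω ∧ (stressMatrix ω).PosSemidef ∧ ω ≠ 0 := by
  by_contra hcon
  push Not at hcon
  -- a stress together with negative vectors for both of its signs, all normalised
  let Z : Set (LimitData V d) :=
    {x | IsEqStress G x.1 x.2.1 ∧
      (Dep S x.1 x.2.2.1 ∧ (stressMatrix x.2.1.1, x.2.2.1.1) ∈ Φ ∧
        x.2.2.1.1 ⬝ᵥ (stressMatrix x.2.1.1).mulVec x.2.2.1.1 ≤ 0) ∧
      (Dep S x.1 x.2.2.2 ∧ (stressMatrix (-x.2.1.1), x.2.2.2.1) ∈ Φ ∧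
        x.2.2.2.1 ⬝ᵥ (stressMatrix (-x.2.1.1)).mulVec x.2.2.2.1 ≤ 0)}
  have hsm : Continuous (stressMatrix : (V → V → ℝ) → Matrix V V ℝ) := by
    refine continuous_pi fun i => continuous_pi fun j => ?_
    by_cases hij : i = j
    · simp only [stressMatrix, hij, if_true]; fun_prop
    · simp only [stressMatrix, hij, if_false]; fun_prop
  have hdep : IsClosed {x : (V → EuclideanSpace ℝ (Fin d)) × (V → ℝ) | Dep S x.1 x.2} := by
    simp only [Dep, Set.ofPred_and, Set.ofPred_forall]
    refine .inter ?_ (.inter ?_ ?_)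
    · exact isClosed_iInter fun i => isClosed_iInter fun _ =>
        isClosed_eq (by fun_prop) continuous_const
    · exact isClosed_eq (by fun_prop) continuous_const
    · exact isClosed_iInter fun i => isClosed_eq (by fun_prop) continuous_const
  have hst : IsClosed {x : (V → EuclideanSpace ℝ (Fin d)) × (V → V → ℝ) |
      IsEqStress G x.1 x.2} := by
    simp only [IsEqStress, Set.ofPred_and, Set.ofPred_forall]
    refine .inter ?_ (.inter ?_ ?_)
    · exact isClosed_iInter fun i => isClosed_iInter fun _ =>
        isClosed_eq (by fun_prop) (by fun_prop)
    · exact isClosed_iInter fun i => isClosed_iInter fun _ => isClosed_iInter fun _ =>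
        isClosed_eq (by fun_prop) continuous_const
    · exact isClosed_iInter fun i => isClosed_eq (by fun_prop) continuous_const
  have hq : IsClosed {x : Matrix V V ℝ × (V → ℝ) | x.2 ⬝ᵥ x.1.mulVec x.2 ≤ 0} :=
    isClosed_le (Continuous.dotProduct continuous_snd
      (Continuous.matrix_mulVec continuous_fst continuous_snd)) continuous_const
  have hsm' : Continuous fun ω : V → V → ℝ => stressMatrix (-ω) := hsm.comp continuous_neg
  have hZ : IsClosed Z := by
    refine .inter (hst.preimage (f := fun x : LimitData V d => (x.1, x.2.1.1)) (by fun_prop)) (.inter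
      (.inter (hdep.preimage (f := fun x : LimitData V d => (x.1, x.2.2.1.1)) (by fun_prop)) (.inter
        (hΦc.preimage (f := fun x : LimitData V d => (stressMatrix x.2.1.1, x.2.2.1.1)) (by fun_prop))
        (hq.preimage (f := fun x : LimitData V d => (stressMatrix x.2.1.1, x.2.2.1.1)) (by fun_prop))))
      (.inter (hdep.preimage (f := fun x : LimitData V d => (x.1, x.2.2.2.1)) (by fun_prop)) (.inter
        (hΦc.preimage (f := fun x : LimitData V d => (stressMatrix (-x.2.1.1), x.2.2.2.1)) (by fun_prop))
        (hq.preimage (f := fun x : LimitData V d => (stressMatrix (-x.2.1.1), x.2.2.2.1)) (by fun_prop)))))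
  have hcl := isClosedMap_fst_of_compactSpace _ hZ
  have hmem : p₀ ∈ Prod.fst '' Z := by
    rw [← hcl.closure_eq, mem_closure_iff_nhds]
    intro U hU
    obtain ⟨p, hpU, hp⟩ := exists_generic_near p₀ hU
    obtain ⟨ω, hω, hω0⟩ := exists_stress_everywhere hind p
    have hn : 0 < ‖ω‖ := norm_pos_iff.2 hω0
    have hη := hω.smul ‖ω‖⁻¹
    have hη0 : ‖‖ω‖⁻¹ • ω‖ = 1 := by rw [norm_smul, norm_inv, norm_norm, inv_mul_cancel₀ hn.ne']
    generalize ‖ω‖⁻¹ • ω = η at hη hη0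
    have hne : η ≠ 0 := by rintro rfl; simp at hη0
    have hη' : IsEqStress G p (-η) := by simpa using hη.smul (-1)
    obtain ⟨w, hw1, hw2⟩ := exists_neg_vector hη fun h => hne (hcon p hp η hη h)
    obtain ⟨w', hw1', hw2'⟩ := exists_neg_vector hη'
      fun h => neg_ne_zero.2 hne (hcon p hp _ hη' h)
    exact ⟨p, hpU, (p, ⟨η, by simpa using hη0⟩, ⟨_, mem_sphere_zero_iff_norm.2 hw1⟩,
      ⟨_, mem_sphere_zero_iff_norm.2 hw1'⟩), ⟨hη, ⟨stressMatrix_mulVec_dep hS hη w, hΦ p hp η hη w, hw2⟩,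
      stressMatrix_mulVec_dep hS hη' w', hΦ p hp _ hη' w', hw2'⟩, rfl⟩
  obtain ⟨⟨p, ⟨ω, hω1⟩, ⟨u, hu1⟩, ⟨u', hu1'⟩⟩, ⟨hω, ⟨hu, huΦ, huq⟩, hu', huΦ', huq'⟩, rfl⟩ := hmem
  dsimp only at *
  obtain ⟨c, hc⟩ := h1 ω hω
  have hc' : stressMatrix (-ω) = (-c) • Ω₀ := by
    have := stressMatrix_smul (ω := ω) (-1)
    rw [neg_one_smul, neg_one_smul, hc] at this
    rw [this, neg_smul]
  have hne : ∀ u : V → ℝ, u ∈ Metric.sphere (0 : V → ℝ) 1 → u ≠ 0 := by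
    rintro u hu rfl; simp at hu
  rw [hc, Matrix.smul_mulVec, dotProduct_smul, smul_eq_mul] at huq
  rw [hc', Matrix.smul_mulVec, dotProduct_smul, smul_eq_mul] at huq'
  rcases lt_trichotomy c 0 with h | h | h
  · exact hne u' hu1' (hdef (-c) (by linarith) u' hu' (hc' ▸ huΦ') (by nlinarith))
  · rw [h, zero_smul] at hc
    have := eq_zero_of_stressMatrix hω hc
    rw [this] at hω1
    simp at hω1
  · exact hne u hu1 (hdef c h.ne' u hu (hc ▸ huΦ) (by nlinarith))

/-! ### Configurations with prescribed affine dependencies -/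

/-- Gale duality: for `d + 1 + k` points of `ℝ^d`, any `k`-dimensional space of vectors with zero
sum, spanned by the columns of `g`, contains all dependencies of a suitable configuration. -/
lemma exists_config_of_gale {V : Type*} [Fintype V] {d k : ℕ} {S : Finset V}
    (hcard : S.card = d + 1 + k) {g : V → Fin k → ℝ} (hg : ∀ i, i ∉ S → g i = 0)
    (hsum : ∑ i, g i = 0) (hinj : ∀ y, (∀ i, g i ⬝ᵥ y = 0) → y = 0) :
    ∃ p : V → EuclideanSpace ℝ (Fin d), ∀ v, Dep S p v → ∃ y, ∀ i, v i = g i ⬝ᵥ y := by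
  classical
  -- vectors on `S` with zero sum
  let s : (S → ℝ) →ₗ[ℝ] ℝ := ∑ i, LinearMap.proj i
  have hs : ∀ v, s v = ∑ i, v i := by intro v; simp [s]
  have hsS : ∀ v : V → ℝ, (∀ i, i ∉ S → v i = 0) → ∑ i : S, v i = ∑ i, v i := by
    intro v hv
    rw [Finset.sum_coe_sort S v]
    exact Finset.sum_subset (Finset.subset_univ _) fun i _ hi => hv i hi
  have hW : Module.finrank ℝ (LinearMap.ker s) = d + k := by
    have hne : S.Nonempty := by rw [← Finset.card_pos]; omega
    obtain ⟨i, hi⟩ := hne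
    have hsurj : LinearMap.range s = ⊤ := by
      rw [LinearMap.range_eq_top]
      intro r
      exact ⟨Pi.single ⟨i, hi⟩ r, by simp [hs]⟩
    have := s.finrank_range_add_finrank_ker
    rw [hsurj, finrank_top, Module.finrank_self, Module.finrank_fintype_fun_eq_card,
      Fintype.card_coe, hcard] at this
    omega
  let L₀ : (Fin k → ℝ) →ₗ[ℝ] (S → ℝ) :=
    { toFun := fun y i => g i ⬝ᵥ y
      map_add' := fun y z => by ext i; simp
      map_smul' := fun c y => by ext i; simp }
  have hL₀ : ∀ y, L₀ y ∈ LinearMap.ker s := by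
    intro y
    rw [LinearMap.mem_ker, hs]
    have : ∀ i, L₀ y i = (fun i => g i ⬝ᵥ y) i := fun _ => rfl
    rw [Finset.sum_congr rfl fun i _ => this i,
      hsS (fun i => g i ⬝ᵥ y) fun i hi => by simp [hg i hi], ← sum_dotProduct, hsum,
      zero_dotProduct]
  let L := L₀.codRestrict (LinearMap.ker s) hL₀
  have hL : Function.Injective L := by
    rw [← LinearMap.ker_eq_bot, LinearMap.ker_eq_bot']
    intro y hy
    refine hinj y fun i => ?_
    by_cases hi : i ∈ S
    · exact congrFun (congrArg Subtype.val hy) ⟨i, hi⟩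
    · simp [hg i hi]
  have hQ : Module.finrank ℝ (LinearMap.ker s ⧸ LinearMap.range L)
      = Module.finrank ℝ (Fin d → ℝ) := by
    have h1 := (LinearMap.range L).finrank_quotient_add_finrank
    rw [LinearMap.finrank_range_of_inj hL, hW] at h1
    simp only [Module.finrank_fintype_fun_eq_card, Fintype.card_fin] at h1 ⊢
    omega
  let e := LinearEquiv.ofFinrankEq _ _ hQ
  obtain ⟨φ, hφ⟩ := (e.toLinearMap ∘ₗ (LinearMap.range L).mkQ).exists_extend
  refine ⟨fun i => WithLp.toLp 2 (if h : i ∈ S then φ (fun j => if ⟨i, h⟩ = j then 1 else 0)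
    else 0), ?_⟩
  rintro v ⟨h1, h2, h3⟩
  have hv : (fun i : S => v i) ∈ LinearMap.ker s := by
    rw [LinearMap.mem_ker, hs, hsS v h1, h2]
  have hφv : φ (fun i : S => v i) = 0 := by
    rw [LinearMap.pi_apply_eq_sum_univ φ]
    ext r
    rw [Finset.sum_apply]
    refine Eq.trans ?_ (h3 r)
    rw [← hsS]
    · refine Finset.sum_congr rfl fun i _ => ?_
      simp
    · intro i hi
      simp [h1 i hi]
  have h5 := LinearMap.congr_fun hφ ⟨_, hv⟩
  simp only [LinearMap.comp_apply, Submodule.subtype_apply, hφv, LinearEquiv.coe_coe] at h5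
  have h6 := (e.map_eq_zero_iff).1 h5.symm
  rw [Submodule.mkQ_apply, Submodule.Quotient.mk_eq_zero] at h6
  obtain ⟨y, hy⟩ := h6
  refine ⟨y, fun i => ?_⟩
  by_cases hi : i ∈ S
  · exact (congrFun (congrArg Subtype.val hy) ⟨i, hi⟩).symm
  · rw [h1 i hi, hg i hi, zero_dotProduct]

/-- A symmetric matrix all of whose columns lie in the column space of an injective `g` has the
form `g M gᵀ`, with `M` symmetric. -/
lemma exists_coeff_matrix {V : Type*} [Fintype V] {k : ℕ} {g : V → Fin k → ℝ}
    (hinj : ∀ y, (∀ i, g i ⬝ᵥ y = 0) → y = 0) {A : Matrix V V ℝ} (hA : A.IsSymm)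
    (hcol : ∀ j, ∃ y, ∀ i, A i j = g i ⬝ᵥ y) :
    ∃ M : Matrix (Fin k) (Fin k) ℝ, M.IsSymm ∧ ∀ i j, A i j = g i ⬝ᵥ M.mulVec (g j) := by
  classical
  have hdet : IsUnit ((Matrix.of g).transpose * Matrix.of g).det := by
    rw [isUnit_iff_ne_zero]
    intro h0
    obtain ⟨y, hy0, hy⟩ := Matrix.exists_mulVec_eq_zero_iff.2 h0
    rw [← Matrix.conjTranspose_eq_transpose_of_trivial,
      Matrix.conjTranspose_mul_self_mulVec_eq_zero] at hy
    exact hy0 (hinj y fun i => congrFun hy i)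
  -- a left inverse of `g`
  let B := ((Matrix.of g).transpose * Matrix.of g)⁻¹ * (Matrix.of g).transpose
  have hB : B * Matrix.of g = 1 := by
    rw [Matrix.mul_assoc, Matrix.nonsing_inv_mul _ hdet]
  choose Y hY using hcol
  have hAY : A = Matrix.of g * (Matrix.of Y).transpose := by
    ext i j; exact hY j i
  have h1 : Matrix.of g * (B * A) = A := by
    conv_lhs => rw [hAY, ← Matrix.mul_assoc B, hB, Matrix.one_mul]
    exact hAY.symm
  have h2 : A * B.transpose * (Matrix.of g).transpose = A := by
    have := congrArg Matrix.transpose h1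
    simpa [Matrix.transpose_mul, hA.eq] using this
  refine ⟨B * A * B.transpose, ?_, fun i j => ?_⟩
  · unfold Matrix.IsSymm
    simp [Matrix.transpose_mul, hA.eq, Matrix.mul_assoc]
  · have h3 : Matrix.of g * (B * A * B.transpose) * (Matrix.of g).transpose = A := by
      rw [← Matrix.mul_assoc, h1, h2]
    have h4 := congrFun (congrFun h3 i) j
    rw [← h4, Matrix.mul_assoc]
    rfl

/-! ### Generic stresses of circuits -/

/-- In a circuit, a generic stress vanishing on an edge is zero. -/
lemma IsCircuitGraph.stress_eq_zero {V : Type*} [Fintype V] {d : ℕ} {G : SimpleGraph V}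
    (hcirc : IsCircuitGraph d G) {p : V → EuclideanSpace ℝ (Fin d)} (hp : Generic p)
    {ω : V → V → ℝ} (hω : IsEqStress G p ω) {a b : V} (hab : G.Adj a b) (h0 : ω a b = 0) :
    ω = 0 := by
  have hlt : G.deleteEdges {s(a, b)} < G := by
    refine lt_of_le_of_ne (SimpleGraph.deleteEdges_le _) fun h => ?_
    rw [← h, SimpleGraph.deleteEdges_adj] at hab
    exact hab.2 rfl
  refine hcirc.2 _ hlt p hp ω ⟨hω.1, fun i j hij => ?_, hω.2.2⟩
  by_cases hG : G.Adj i j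
  · rw [SimpleGraph.deleteEdges_adj] at hij
    have : s(i, j) = s(a, b) := by
      by_contra hne
      exact hij ⟨hG, hne⟩
    rcases Sym2.eq_iff.1 this with ⟨rfl, rfl⟩ | ⟨rfl, rfl⟩
    · exact h0
    · rw [hω.1, h0]
  · exact hω.2.1 i j hG

section Circuit

variable {V : Type*} [Fintype V] [DecidableEq V] {d : ℕ} {G : SimpleGraph V} {S : Finset V}

/-- A vertex of a circuit with a neighbour has at least `d + 1` neighbours. -/
lemma IsCircuitGraph.card_support (hcirc : IsCircuitGraph d G) (hS : ∀ i j, G.Adj i j → i ∈ S)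
    {i j : V} (hij : G.Adj i j) {T : Finset V} (hTS : T ⊆ S)
    (hT : ∀ t ∈ T, t ≠ i ∧ ¬ G.Adj i t) : d + 2 + T.card ≤ S.card := by
  obtain ⟨p, -, hp⟩ := exists_generic_near (0 : V → EuclideanSpace ℝ (Fin d)) Filter.univ_mem
  obtain ⟨ω, hω, hω0⟩ := exists_stress_everywhere hcirc.1 p
  have hne : stressMatrix ω j i ≠ 0 := by
    intro h
    rw [stressMatrix_of_ne hij.ne', neg_eq_zero] at h
    exact hω0 (hcirc.stress_eq_zero hp hω hij.symm h)
  by_contra hcon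
  have hle : (S \ T).card ≤ d + 1 := by
    have := Finset.card_sdiff_add_card_eq_card hTS
    omega
  refine hne (congrFun (dep_eq_zero hp hle (stressMatrix_dep hω (j := i) fun t ht => ?_)) j)
  by_cases htS : t ∈ S
  · have htT : t ∈ T := by
      by_contra h
      exact ht (Finset.mem_sdiff.2 ⟨htS, h⟩)
    exact stressMatrix_apply_of_not_adj hω (hT t htT).1 fun h => (hT t htT).2 h.symm
  · exact stressMatrix_support hω hS htS i

/-- By counting dimensions, `d + 1 + k` points of `ℝ^d` have `k` independent dependencies. -/
lemma exists_dep_family {p : V → EuclideanSpace ℝ (Fin d)} {k : ℕ} (hcard : S.card = d + 1 + k) :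
    ∃ g : Fin k → V → ℝ, (∀ s, Dep S p (g s)) ∧
      ∀ w : Fin k → ℝ, (∀ i, ∑ s, w s * g s i = 0) → w = 0 := by
  -- a basis of (part of) the space of dependencies
  let c : (S → ℝ) →ₗ[ℝ] (Option (Fin d) → ℝ) :=
    LinearMap.pi fun o => ∑ i : S, (o.elim 1 fun r => p i r) • LinearMap.proj i
  have hker : k ≤ Module.finrank ℝ (LinearMap.ker c) := by
    have h1 := c.finrank_range_add_finrank_ker
    have h2 := (LinearMap.range c).finrank_le
    simp only [Module.finrank_fintype_fun_eq_card, Fintype.card_option, Fintype.card_fin,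
      Fintype.card_coe] at h1 h2
    omega
  obtain ⟨h, hh⟩ := exists_linearIndependent_of_le_finrank hker
  have hli : LinearIndependent ℝ (fun s => (h s : S → ℝ)) :=
    hh.map' (LinearMap.ker c).subtype (Submodule.ker_subtype _)
  let g : Fin k → V → ℝ := fun s i => if hi : i ∈ S then (h s : S → ℝ) ⟨i, hi⟩ else 0
  have hgi : ∀ s i, i ∉ S → g s i = 0 := fun s i hi => by simp [g, hi]
  have hgsum : ∀ s (x : V → ℝ), ∑ i, g s i * x i = ∑ i : S, (h s : S → ℝ) i * x i := by
    intro s x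
    rw [← Finset.sum_subset (Finset.subset_univ S) fun i _ hi => by rw [hgi s i hi, zero_mul],
      ← Finset.sum_coe_sort]
    exact Finset.sum_congr rfl fun i _ => by simp [g]
  have hc0 : ∀ (s : Fin k) (o : Option (Fin d)), ∑ i : S, (o.elim 1 fun r => p i r) * (h s : S → ℝ) i = 0 := by
    intro s o
    have := congrFun (LinearMap.mem_ker.1 (h s).2) o
    simpa [c] using this
  have hg1 : ∀ s, ∑ i, g s i = 0 := by
    intro s
    have h1 := hgsum s (fun _ => 1)
    have h2 := hc0 s none
    simp only [Option.elim_none, one_mul] at h2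
    simp only [mul_one] at h1
    rw [h1, h2]
  have hgp : ∀ s r, ∑ i, g s i * p i r = 0 := by
    intro s r
    have h2 := hc0 s (some r)
    rw [hgsum s (fun i => p i r), ← h2]
    exact Finset.sum_congr rfl fun i _ => mul_comm _ _
  refine ⟨g, fun s => ⟨hgi s, hg1 s, hgp s⟩, ?_⟩
  intro w hw
  ext s
  refine Fintype.linearIndependent_iff.1 hli w ?_ s
  ext i
  have := hw i
  simpa [g] using this

/-- A count of nonedges: symmetric matrices with columns among the dependencies form a space of
dimension at least `(k + 1).choose 2`, so if the nonedges were fewer than this by two or more,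
one more linear condition would leave a stress vanishing on an edge. -/
lemma IsCircuitGraph.choose_le_card (hcirc : IsCircuitGraph d G) {a b : V} (hab : G.Adj a b)
    {k : ℕ} (hcard : S.card = d + 1 + k) {C : Finset (V × V)}
    (hC : ∀ i ∈ S, ∀ j ∈ S, i ≠ j → ¬ G.Adj i j → (i, j) ∈ C ∨ (j, i) ∈ C) :
    (k + 1).choose 2 ≤ C.card + 1 := by
  obtain ⟨p, -, hp⟩ := exists_generic_near (0 : V → EuclideanSpace ℝ (Fin d)) Filter.univ_mem
  obtain ⟨g, hg, hgli⟩ := exists_dep_family (p := p) hcard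
  -- symmetric matrices built from dependencies
  let A : (Sym2 (Fin k) → ℝ) →ₗ[ℝ] (V → V → ℝ) :=
    { toFun := fun θ i j => ∑ s, (∑ t, θ s(s, t) * g t j) * g s i
      map_add' := fun θ η => by
        ext i j; simp [add_mul, Finset.sum_add_distrib]
      map_smul' := fun r θ => by
        ext i j; simp [Finset.mul_sum, Finset.sum_mul, mul_assoc] }
  have hA : ∀ θ i j, A θ i j = ∑ s, (∑ t, θ s(s, t) * g t j) * g s i := fun _ _ _ => rfl
  have hA0 : ∀ θ, A θ = 0 → θ = 0 := by
    intro θ hθ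
    have h1 : ∀ j, (fun s => ∑ t, θ s(s, t) * g t j) = 0 := fun j =>
      hgli _ fun i => congrFun (congrFun hθ i) j
    have h2 : ∀ s, (fun t => θ s(s, t)) = 0 := fun s => hgli _ fun j => congrFun (h1 j) s
    ext e
    induction e with
    | _ s t => exact congrFun (h2 s) t
  by_contra hcon
  let Λ : (Sym2 (Fin k) → ℝ) →ₗ[ℝ] (Option C → ℝ) :=
    { toFun := fun θ o => o.elim (A θ a b) fun e => A θ e.1.1 e.1.2
      map_add' := fun θ η => by ext o; cases o <;> simp
      map_smul' := fun r θ => by ext o; cases o <;> simp }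
  have hΛ : LinearMap.ker Λ ≠ ⊥ := by
    apply LinearMap.ker_ne_bot_of_finrank_lt
    simp only [Module.finrank_fintype_fun_eq_card, Fintype.card_option, Fintype.card_coe,
      Sym2.card, Fintype.card_fin]
    omega
  obtain ⟨θ, hθ, hθ0⟩ := (Submodule.ne_bot_iff _).1 hΛ
  have hθa : A θ a b = 0 := congrFun (LinearMap.mem_ker.1 hθ) none
  have hθC : ∀ e ∈ C, A θ e.1 e.2 = 0 := fun e he =>
    congrFun (LinearMap.mem_ker.1 hθ) (some ⟨e, he⟩)
  have hsymm : ∀ i j, A θ i j = A θ j i := by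
    intro i j
    simp only [hA, Finset.sum_mul]
    rw [Finset.sum_comm]
    refine Finset.sum_congr rfl fun s _ => Finset.sum_congr rfl fun t _ => ?_
    rw [Sym2.eq_swap]; ring
  have hAS : ∀ i j, i ∉ S → A θ i j = 0 := fun i j hi => by
    rw [hA]
    exact Finset.sum_eq_zero fun s _ => by rw [(hg s).1 i hi, mul_zero]
  obtain ⟨ω, hω, hωA⟩ := exists_stress_of_matrix (G := G) (S := S) (p := p) (A := A θ) hsymm
    (fun i j hij hG => by
      by_cases hi : i ∈ S
      · by_cases hj : j ∈ S
        · rcases hC i hi j hj hij hG with h | h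
          · exact hθC _ h
          · rw [hsymm]; exact hθC _ h
        · rw [hsymm]; exact hAS j i hj
      · exact hAS i j hi)
    (fun j => ⟨fun i hi => hAS i j hi, by
      simp only [hA]
      rw [Finset.sum_comm]
      exact Finset.sum_eq_zero fun s _ => by rw [← Finset.mul_sum, (hg s).2.1, mul_zero], fun r => by
      simp only [hA, Finset.sum_mul _ _ (p _ r)]
      rw [Finset.sum_comm]
      refine Finset.sum_eq_zero fun s _ => ?_
      simp only [mul_assoc _ (g _ _)]
      rw [← Finset.mul_sum, (hg s).2.2 r, mul_zero]⟩)
  apply hθ0 (hA0 θ _)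
  rw [← hωA] at hθa ⊢
  rw [stressMatrix_of_ne hab.ne, neg_eq_zero] at hθa
  rw [hcirc.stress_eq_zero hp hω hab hθa]
  ext i j
  simp [stressMatrix]

end Circuit

/-! ### Gale templates -/

/-- The Gale vectors obtained by placing `(N j)⁻¹ • x j` at each vertex with label `j`, and `0`
at each vertex without a label. -/
noncomputable def galeVec {V : Type*} {m k : ℕ} (f : V → Option (Fin m)) (N : Fin m → ℝ)
    (x : Fin m → Fin k → ℝ) (i : V) : Fin k → ℝ :=
  (f i).elim 0 fun j => (N j)⁻¹ • x j

/-- The matrix `g M gᵀ`, whose rows and columns are indexed by vertices. -/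
def gramForm {V : Type*} {k : ℕ} (g : V → Fin k → ℝ) (M : Matrix (Fin k) (Fin k) ℝ) :
    Matrix V V ℝ :=
  fun i j => g i ⬝ᵥ M.mulVec (g j)

/-- A labelling of the vertices, together with vectors `x` of zero sum such that the equations
coming from nonadjacent pairs determine a symmetric form `M₀` up to scaling, gives a special
configuration to which `exists_generic_psd` applies. In `hdef`, the vector `u` is `gᵀ v` for the
dependency `v = g y`. -/
lemma generic_psd_of_template {V : Type*} [Fintype V] [DecidableEq V] {d k m : ℕ}
    {G : SimpleGraph V} {S : Finset V} (hS : ∀ i j, G.Adj i j → i ∈ S)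
    (hcard : S.card = d + 1 + k) (hind : ¬ IsIndepGraph d G)
    (f : V → Option (Fin m)) (hf : ∀ i, f i ≠ none → i ∈ S) (hfs : ∀ j, ∃ i, f i = some j)
    (x : Fin m → Fin k → ℝ) (hx : ∑ j, x j = 0) (hspan : ∀ y, (∀ j, x j ⬝ᵥ y = 0) → y = 0)
    (E : Fin m → Fin m → Prop)
    (hE : ∀ j j', E j j' → ∃ i i', i ≠ i' ∧ ¬ G.Adj i i' ∧ f i = some j ∧ f i' = some j')
    (M₀ : Matrix (Fin k) (Fin k) ℝ)
    (hM : ∀ M : Matrix (Fin k) (Fin k) ℝ, M.IsSymm →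
      (∀ j j', E j j' → x j ⬝ᵥ M.mulVec (x j') = 0) → ∃ c : ℝ, M = c • M₀)
    (Φ : Set (Matrix V V ℝ × (V → ℝ))) (hΦc : IsClosed Φ)
    (hΦ : ∀ p : V → EuclideanSpace ℝ (Fin d), Generic p → ∀ ω, IsEqStress G p ω → ∀ w,
      (stressMatrix ω, (stressMatrix ω).mulVec w) ∈ Φ)
    (hdef : ∀ N : Fin m → ℝ, (∀ j, 0 < N j) → ∀ c : ℝ, c ≠ 0 → ∀ y u,
      (c • gramForm (galeVec f N x) M₀, fun i => galeVec f N x i ⬝ᵥ y) ∈ Φ →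
      u ⬝ᵥ M₀.mulVec u ≤ 0 → u ⬝ᵥ y = 0) :
    ∃ p : V → EuclideanSpace ℝ (Fin d), Generic p ∧
      ∃ ω, IsEqStress G p ω ∧ (stressMatrix ω).PosSemidef ∧ ω ≠ 0 := by
  let N : Fin m → ℝ := fun j => ((Finset.univ.filter fun i => f i = some j).card : ℝ)
  have hN : ∀ j, 0 < N j := by
    intro j
    obtain ⟨i, hi⟩ := hfs j
    exact Nat.cast_pos.2 (Finset.card_pos.2 ⟨i, by simpa using hi⟩)
  specialize hdef N hN
  have hgs : ∀ i j, f i = some j → galeVec f N x i = (N j)⁻¹ • x j := by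
    intro i j h; simp [galeVec, h]
  have hg0 : ∀ i, i ∉ S → galeVec f N x i = 0 := by
    intro i hi
    have : f i = none := by by_contra h; exact hi (hf i h)
    simp [galeVec, this]
  have hsum : ∑ i, galeVec f N x i = 0 := by
    have h1 : ∀ i, galeVec f N x i = ∑ j, if f i = some j then (N j)⁻¹ • x j else 0 := by
      intro i
      cases h : f i with
      | none => simp [galeVec, h]
      | some j => simp [galeVec, h]
    simp only [h1]
    rw [Finset.sum_comm]
    refine Eq.trans ?_ hx
    refine Finset.sum_congr rfl fun j _ => ?_
    rw [← Finset.sum_filter, Finset.sum_const, ← Nat.cast_smul_eq_nsmul ℝ, smul_smul,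
      mul_inv_cancel₀ (hN j).ne', one_smul]
  have hinj : ∀ y, (∀ i, galeVec f N x i ⬝ᵥ y = 0) → y = 0 := by
    intro y hy
    refine hspan y fun j => ?_
    obtain ⟨i, hi⟩ := hfs j
    have := hy i
    rw [hgs i j hi, smul_dotProduct, smul_eq_mul] at this
    exact (mul_eq_zero.1 this).resolve_left (inv_ne_zero (hN j).ne')
  generalize hg : galeVec f N x = g at *
  obtain ⟨p₀, hp₀⟩ := exists_config_of_gale hcard hg0 hsum hinj
  refine exists_generic_psd (p₀ := p₀) (Ω₀ := gramForm g M₀) hS hind Φ hΦc hΦ ?_ ?_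
  · intro ω hω
    obtain ⟨M, hMs, hMg⟩ := exists_coeff_matrix (A := stressMatrix ω) hinj
      (by ext i j; exact stressMatrix_symm hω j i)
      (fun j => hp₀ _ (stressMatrix_dep hω fun i hi => stressMatrix_support hω hS hi j))
    obtain ⟨c, rfl⟩ := hM M hMs (by
      intro j j' hjj
      obtain ⟨i, i', hne, hadj, hi, hi'⟩ := hE j j' hjj
      have h0 := hMg i i'
      rw [stressMatrix_apply_of_not_adj hω hne hadj, hgs i j hi, hgs i' j' hi',
        Matrix.mulVec_smul, smul_dotProduct, dotProduct_smul] at h0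
      have h1 := (smul_eq_zero.1 h0.symm).resolve_left (inv_ne_zero (hN j).ne')
      exact (smul_eq_zero.1 h1).resolve_left (inv_ne_zero (hN j').ne'))
    refine ⟨c, ?_⟩
    ext i j
    rw [hMg, Matrix.smul_mulVec, dotProduct_smul]
    rfl
  · intro c hc v hv hvΦ hvq
    obtain ⟨y, hy⟩ := hp₀ v hv
    obtain rfl : v = fun i => g i ⬝ᵥ y := funext hy
    have h1 : (∑ i, (g i ⬝ᵥ y) • g i) ⬝ᵥ M₀.mulVec (∑ i, (g i ⬝ᵥ y) • g i) ≤ 0 := by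
      refine le_of_eq_of_le ?_ hvq
      rw [Matrix.mulVec_sum, sum_dotProduct]
      refine Finset.sum_congr rfl fun i _ => ?_
      rw [smul_dotProduct, smul_eq_mul, dotProduct_sum]
      congr 1
      refine Finset.sum_congr rfl fun j _ => ?_
      rw [Matrix.mulVec_smul, dotProduct_smul, smul_eq_mul, mul_comm]
      rfl
    have h2 := hdef c hc y _ hvΦ h1
    rw [sum_dotProduct] at h2
    simp only [smul_dotProduct, smul_eq_mul] at h2
    rw [Finset.sum_eq_zero_iff_of_nonneg fun i _ => mul_self_nonneg _] at h2
    ext i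
    exact mul_self_eq_zero.1 (h2 i (Finset.mem_univ i))

/-- The case in which the template determines a definite form. This happens when the vectors `x j`,
`x j'` with `E j j'` are orthogonal and there are enough such pairs. -/
lemma generic_psd_of_template_one {V : Type*} [Fintype V] [DecidableEq V] {d k m : ℕ}
    {G : SimpleGraph V} {S : Finset V} (hS : ∀ i j, G.Adj i j → i ∈ S)
    (hcard : S.card = d + 1 + k) (hind : ¬ IsIndepGraph d G)
    (f : V → Option (Fin m)) (hf : ∀ i, f i ≠ none → i ∈ S) (hfs : ∀ j, ∃ i, f i = some j)
    (x : Fin m → Fin k → ℝ) (hx : ∑ j, x j = 0) (hspan : ∀ y, (∀ j, x j ⬝ᵥ y = 0) → y = 0)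
    (E : Fin m → Fin m → Prop)
    (hE : ∀ j j', E j j' → ∃ i i', i ≠ i' ∧ ¬ G.Adj i i' ∧ f i = some j ∧ f i' = some j')
    (hM : ∀ M : Matrix (Fin k) (Fin k) ℝ, M.IsSymm →
      (∀ j j', E j j' → x j ⬝ᵥ M.mulVec (x j') = 0) → ∃ c : ℝ, M = c • 1) :
    ∃ p : V → EuclideanSpace ℝ (Fin d), Generic p ∧
      ∃ ω, IsEqStress G p ω ∧ (stressMatrix ω).PosSemidef ∧ ω ≠ 0 := by
  refine generic_psd_of_template hS hcard hind f hf hfs x hx hspan E hE 1 hM Set.univ isClosed_univ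
    (fun _ _ _ _ _ => Set.mem_univ _) ?_
  intro N _ c _ y u _ hu
  rw [Matrix.one_mulVec] at hu
  have h0 : u ⬝ᵥ u = 0 := le_antisymm hu (Finset.sum_nonneg fun i _ => mul_self_nonneg _)
  rw [dotProduct_self_eq_zero.1 h0, zero_dotProduct]

/-- The labelling `f` sends some nonadjacent pair of vertices to each pair of labels in `L`. -/
def Realizes {V : Type*} {m : ℕ} (G : SimpleGraph V) (f : V → Option (Fin m))
    (L : List (Fin m × Fin m)) : Prop :=
  ∀ e ∈ L, ∃ i i', i ≠ i' ∧ ¬ G.Adj i i' ∧ f i = some e.1 ∧ f i' = some e.2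

lemma Realizes.surj {V : Type*} {m : ℕ} {G : SimpleGraph V} {f : V → Option (Fin m)}
    {L : List (Fin m × Fin m)} (h : Realizes G f L)
    (hL : ∀ j, ∃ e ∈ L, e.1 = j ∨ e.2 = j) (j : Fin m) : ∃ i, f i = some j := by
  obtain ⟨e, he, hj⟩ := hL j
  obtain ⟨i, i', -, -, h1, h2⟩ := h e he
  rcases hj with rfl | rfl
  exacts [⟨i, h1⟩, ⟨i', h2⟩]

section Templates

variable {V : Type*} [Fintype V] [DecidableEq V] {d : ℕ} {G : SimpleGraph V} {S : Finset V}

/-- With `d + 2` vertices the dependencies of generic points form a line, and a form on a line is a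
multiple of the identity. -/
lemma generic_psd_rank_one (hS : ∀ i j, G.Adj i j → i ∈ S) (hcard : S.card = d + 1 + 1)
    (hind : ¬ IsIndepGraph d G) :
    ∃ p : V → EuclideanSpace ℝ (Fin d), Generic p ∧
      ∃ ω, IsEqStress G p ω ∧ (stressMatrix ω).PosSemidef ∧ ω ≠ 0 := by
  obtain ⟨a, ha, b, hb, hab⟩ := Finset.one_lt_card.1 (show 1 < S.card by omega)
  refine generic_psd_of_template_one (m := 2) (k := 1) hS hcard hind
    (fun i => if i = a then some 0 else if i = b then some 1 else none) ?_ ?_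
    ![![1], ![-1]] ?_ ?_ (fun _ _ => False) (by simp) ?_
  · intro i hi
    by_cases h1 : i = a
    · rwa [h1]
    · by_cases h2 : i = b
      · rwa [h2]
      · simp [h1, h2] at hi
  · intro j
    fin_cases j
    · exact ⟨a, by simp⟩
    · exact ⟨b, by simp [hab.symm]⟩
  · ext i; fin_cases i; simp
  · intro y hy
    ext i; fin_cases i
    have h0 := hy 0
    simp [dotProduct] at h0
    simpa using h0
  · intro M _ _
    refine ⟨M 0 0, ?_⟩
    ext i j; fin_cases i; fin_cases j; simp

/-- Two disjoint nonedges, with `d + 3` vertices. The template vectors are orthogonal for the pairs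
`01` and `23`. -/
lemma generic_psd_two_edges (hS : ∀ i j, G.Adj i j → i ∈ S) (hcard : S.card = d + 1 + 2)
    (hind : ¬ IsIndepGraph d G) (f : V → Option (Fin 4)) (hf : ∀ i, f i ≠ none → i ∈ S)
    (hr : Realizes G f [(0, 1), (2, 3)]) :
    ∃ p : V → EuclideanSpace ℝ (Fin d), Generic p ∧
      ∃ ω, IsEqStress G p ω ∧ (stressMatrix ω).PosSemidef ∧ ω ≠ 0 := by
  refine generic_psd_of_template_one hS hcard hind f hf (hr.surj (by decide))
    ![![-3, 0], ![0, -1], ![2, 2], ![1, -1]] ?_ ?_ (fun j j' => (j, j') ∈ [(0, 1), (2, 3)])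
    (fun j j' h => hr _ h) ?_
  · ext i; fin_cases i <;> simp [Fin.sum_univ_succ] <;> norm_num
  · intro y hy
    have h0 := hy 0
    have h1 := hy 1
    simp [dotProduct, Fin.sum_univ_succ] at h0 h1
    ext i; fin_cases i <;> simp <;> linarith
  · intro M hM h
    have s01 : M 1 0 = M 0 1 := hM.apply 0 1
    have e1 := h 0 1 (by simp)
    have e2 := h 2 3 (by simp)
    simp [Matrix.mulVec, dotProduct, Fin.sum_univ_succ] at e1 e2
    refine ⟨M 0 0, ?_⟩
    ext i j; fin_cases i <;> fin_cases j <;> simp <;> linarith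

/-- Nonedges wrapped around a pentagon, with `d + 4` vertices. Several vertices may share a label:
only the images of the nonedges have to be the five sides. The template vectors
are orthogonal along the sides. -/
lemma generic_psd_pentagon (hS : ∀ i j, G.Adj i j → i ∈ S) (hcard : S.card = d + 1 + 3)
    (hind : ¬ IsIndepGraph d G) (f : V → Option (Fin 5)) (hf : ∀ i, f i ≠ none → i ∈ S)
    (hr : Realizes G f [(0, 1), (1, 2), (2, 3), (3, 4), (4, 0)]) :
    ∃ p : V → EuclideanSpace ℝ (Fin d), Generic p ∧
      ∃ ω, IsEqStress G p ω ∧ (stressMatrix ω).PosSemidef ∧ ω ≠ 0 := by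
  refine generic_psd_of_template_one hS hcard hind f hf (hr.surj (by decide))
    ![![-3, 0, 0], ![0, -3, 0], ![1, 0, 1], ![2, 2, -2], ![0, 1, 1]] ?_ ?_
    (fun j j' => (j, j') ∈ [(0, 1), (1, 2), (2, 3), (3, 4), (4, 0)])
    (fun j j' h => hr _ h) ?_
  · ext i; fin_cases i <;> simp [Fin.sum_univ_succ] <;> norm_num
  · intro y hy
    have h0 := hy 0
    have h1 := hy 1
    have h2 := hy 2
    simp [dotProduct, Fin.sum_univ_succ] at h0 h1 h2
    ext i; fin_cases i <;> simp <;> linarith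
  · intro M hM h
    have s01 : M 1 0 = M 0 1 := hM.apply 0 1
    have s02 : M 2 0 = M 0 2 := hM.apply 0 2
    have s12 : M 2 1 = M 1 2 := hM.apply 1 2
    have e1 := h 0 1 (by simp)
    have e2 := h 1 2 (by simp)
    have e3 := h 2 3 (by simp)
    have e4 := h 3 4 (by simp)
    have e5 := h 4 0 (by simp)
    simp [Matrix.mulVec, dotProduct, Fin.sum_univ_succ] at e1 e2 e3 e4 e5
    refine ⟨M 0 0, ?_⟩
    ext i j; fin_cases i <;> fin_cases j <;> simp <;> linarith

/-- Nonedges forming a triangle and a path (or two separate edges), with `d + 4` vertices. -/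
lemma generic_psd_triangle (hS : ∀ i j, G.Adj i j → i ∈ S) (hcard : S.card = d + 1 + 3)
    (hind : ¬ IsIndepGraph d G) (f : V → Option (Fin 6)) (hf : ∀ i, f i ≠ none → i ∈ S)
    (hr : Realizes G f [(0, 1), (1, 2), (0, 2), (3, 4), (4, 5)]) :
    ∃ p : V → EuclideanSpace ℝ (Fin d), Generic p ∧
      ∃ ω, IsEqStress G p ω ∧ (stressMatrix ω).PosSemidef ∧ ω ≠ 0 := by
  refine generic_psd_of_template_one hS hcard hind f hf (hr.surj (by decide))
    ![![-3, 0, 0], ![0, -1, 0], ![0, 0, 1], ![1, -1, 0], ![1, 1, 1], ![1, 1, -2]] ?_ ?_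
    (fun j j' => (j, j') ∈ [(0, 1), (1, 2), (0, 2), (3, 4), (4, 5)])
    (fun j j' h => hr _ h) ?_
  · ext i; fin_cases i <;> simp [Fin.sum_univ_succ] <;> norm_num
  · intro y hy
    have h0 := hy 0
    have h1 := hy 1
    have h2 := hy 2
    simp [dotProduct, Fin.sum_univ_succ] at h0 h1 h2
    ext i; fin_cases i <;> simp <;> linarith
  · intro M hM h
    have s01 : M 1 0 = M 0 1 := hM.apply 0 1
    have s02 : M 2 0 = M 0 2 := hM.apply 0 2
    have s12 : M 2 1 = M 1 2 := hM.apply 1 2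
    have e1 := h 0 1 (by simp)
    have e2 := h 1 2 (by simp)
    have e3 := h 0 2 (by simp)
    have e4 := h 3 4 (by simp)
    have e5 := h 4 5 (by simp)
    simp [Matrix.mulVec, dotProduct, Fin.sum_univ_succ] at e1 e2 e3 e4 e5
    refine ⟨M 0 0, ?_⟩
    ext i j; fin_cases i <;> fin_cases j <;> simp <;> linarith

/-- Nonedges forming a square `0123` and a disjoint edge, with `d + 4` vertices. The template only
determines a semidefinite form with a one-dimensional kernel. For generic `p` the columns at
the opposite vertices `a`, `c` of the square are dependencies on a common set of `d + 2`
points, hence proportional; this closed condition survives in the limit and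
excludes the kernel. -/
lemma generic_psd_square (hS : ∀ i j, G.Adj i j → i ∈ S) (hcard : S.card = d + 1 + 3)
    (hind : ¬ IsIndepGraph d G) (f : V → Option (Fin 6)) (hf : ∀ i, f i ≠ none → i ∈ S)
    {v : Fin 4 → V} (hv : Function.Injective v)
    (hv01 : ¬ G.Adj (v 0) (v 1)) (hv12 : ¬ G.Adj (v 1) (v 2)) (hv23 : ¬ G.Adj (v 2) (v 3))
    (hv30 : ¬ G.Adj (v 3) (v 0))
    (hf0 : f (v 0) = some 0) (hf1 : f (v 1) = some 1) (hf2 : f (v 2) = some 2)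
    (hf3 : f (v 3) = some 3) (hr : Realizes G f [(4, 5)]) :
    ∃ p : V → EuclideanSpace ℝ (Fin d), Generic p ∧
      ∃ ω, IsEqStress G p ω ∧ (stressMatrix ω).PosSemidef ∧ ω ≠ 0 := by
  have hne : ∀ a b, a ≠ b → v a ≠ v b := fun a b h h' => h (hv h')
  have hr' : Realizes G f [(0, 1), (1, 2), (2, 3), (3, 0), (4, 5)] := by
    intro e he
    simp only [List.mem_cons, List.not_mem_nil, or_false] at he
    rcases he with rfl | rfl | rfl | rfl | rfl
    · exact ⟨_, _, hne 0 1 (by decide), hv01, hf0, hf1⟩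
    · exact ⟨_, _, hne 1 2 (by decide), hv12, hf1, hf2⟩
    · exact ⟨_, _, hne 2 3 (by decide), hv23, hf2, hf3⟩
    · exact ⟨_, _, hne 3 0 (by decide), hv30, hf3, hf0⟩
    · exact hr _ (by simp)
  refine generic_psd_of_template hS hcard hind f hf (hr'.surj (by decide))
    ![![1, 1, 0], ![-1, 0, 1], ![1, -3, 0], ![-1, 0, -1], ![0, 1, 1], ![0, 1, -1]] ?_ ?_
    (fun j j' => (j, j') ∈ [(0, 1), (1, 2), (2, 3), (3, 0), (4, 5)])
    (fun j j' h => hr' _ h) (Matrix.diagonal ![0, 1, 1]) ?_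
    {x | x.2 (v 0) * x.1 (v 2) (v 2) = x.2 (v 2) * x.1 (v 2) (v 0)} ?_ ?_ ?_
  · ext i; fin_cases i <;> simp [Fin.sum_univ_succ] <;> norm_num
  · intro y hy
    have h0 := hy 0
    have h1 := hy 1
    have h2 := hy 2
    simp [dotProduct, Fin.sum_univ_succ] at h0 h1 h2
    ext i; fin_cases i <;> simp <;> linarith
  · intro M hM h
    have s01 : M 1 0 = M 0 1 := hM.apply 0 1
    have s02 : M 2 0 = M 0 2 := hM.apply 0 2
    have s12 : M 2 1 = M 1 2 := hM.apply 1 2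
    have e1 := h 0 1 (by simp)
    have e2 := h 1 2 (by simp)
    have e3 := h 2 3 (by simp)
    have e4 := h 3 0 (by simp)
    have e5 := h 4 5 (by simp)
    simp [Matrix.mulVec, dotProduct, Fin.sum_univ_succ] at e1 e2 e3 e4 e5
    refine ⟨M 1 1, ?_⟩
    ext i j; fin_cases i <;> fin_cases j <;> simp <;> linarith
  · exact isClosed_eq (by fun_prop) (by fun_prop)
  · intro p hp ω hω w
    have hzero : ∀ i j, v i ≠ v j → ¬ G.Adj (v i) (v j) → stressMatrix ω (v i) (v j) = 0 :=
      fun i j h1 h2 => stressMatrix_apply_of_not_adj hω h1 h2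
    -- the columns at `v 0` and `v 2`, combined so as to vanish at `v 1`, `v 2`, `v 3`
    have hz := stressMatrix_mulVec_dep hS hω (Pi.single (v 0) (stressMatrix ω (v 2) (v 2))
      - Pi.single (v 2) (stressMatrix ω (v 2) (v 0)))
    rw [Matrix.mulVec_sub, Matrix.mulVec_single, Matrix.mulVec_single] at hz
    have hT : (S \ {v 1, v 2, v 3}).card ≤ d + 1 := by
      have hsub : ({v 1, v 2, v 3} : Finset V) ⊆ S := by
        intro i hi
        simp only [Finset.mem_insert, Finset.mem_singleton] at hi
        rcases hi with rfl | rfl | rfl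
        exacts [hf _ (by simp [hf1]), hf _ (by simp [hf2]), hf _ (by simp [hf3])]
      have h3 : ({v 1, v 2, v 3} : Finset V).card = 3 :=
        Finset.card_eq_three.2 ⟨_, _, _, hne 1 2 (by decide), hne 1 3 (by decide),
          hne 2 3 (by decide), rfl⟩
      rw [Finset.card_sdiff_of_subset hsub, hcard, h3]
      omega
    have hz0 := dep_eq_zero hp hT (v := _) ⟨fun i hi => ?_, hz.2⟩
    · have hcol : ∀ i, stressMatrix ω (v 2) (v 2) * stressMatrix ω i (v 0)
          = stressMatrix ω (v 2) (v 0) * stressMatrix ω i (v 2) := by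
        intro i
        have := congrFun hz0 i
        simp [sub_eq_zero] at this
        linarith
      simp only [Set.mem_ofPred_eq, Matrix.mulVec, dotProduct, Finset.sum_mul]
      refine Finset.sum_congr rfl fun i _ => ?_
      have h1 := hcol i
      rw [stressMatrix_symm hω (v 0) i, stressMatrix_symm hω (v 2) i]
      linear_combination w i * h1
    · by_cases hiS : i ∈ S
      · have : i = v 1 ∨ i = v 2 ∨ i = v 3 := by
          by_contra hcon
          exact hi (by simp [hiS]; tauto)
        rcases this with rfl | rfl | rfl
        · have h1 := hzero 1 0 (hne 1 0 (by decide)) fun h => hv01 h.symm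
          have h2 := hzero 1 2 (hne 1 2 (by decide)) hv12
          simp [h1, h2]
        · simp [mul_comm]
        · have h1 := hzero 3 0 (hne 3 0 (by decide)) hv30
          have h2 := hzero 3 2 (hne 3 2 (by decide)) fun h => hv23 h.symm
          simp [h1, h2]
      · exact hz.1 i hiS
  · intro N hN c hc y u hΦ hu
    have hu' : u 1 * u 1 + u 2 * u 2 ≤ 0 := by
      simpa [Matrix.mulVec_diagonal, dotProduct, Fin.sum_univ_succ] using hu
    have h1 : u 1 = 0 := by nlinarith [mul_self_nonneg (u 1), mul_self_nonneg (u 2)]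
    have h2 : u 2 = 0 := by nlinarith [mul_self_nonneg (u 1), mul_self_nonneg (u 2)]
    have hN0 := (hN 0).ne'
    have hN2 := (hN 2).ne'
    simp [gramForm, galeVec, hf0, hf2, Matrix.mulVec_diagonal, dotProduct, Fin.sum_univ_succ] at hΦ
    field_simp at hΦ
    have hy : y 0 = 0 := by linarith
    simp [dotProduct, Fin.sum_univ_succ, h1, h2, hy]

end Templates

/-! ### Graphs of maximum degree two with at least five edges -/

section MaxDegreeTwo

variable {V : Type*} {H : SimpleGraph V}

/-- The labelling `f`, defined on non-isolated vertices only, sends some edge of `H` to each pair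
of labels in `L`. -/
def LabelsEdges {V : Type*} {m : ℕ} (H : SimpleGraph V) (f : V → Option (Fin m))
    (L : List (Fin m × Fin m)) : Prop :=
  (∀ i, f i ≠ none → ∃ j, H.Adj i j) ∧
    ∀ e ∈ L, ∃ i i', H.Adj i i' ∧ f i = some e.1 ∧ f i' = some e.2

/-- Maximum degree at most two. -/
def DegLeTwo {V : Type*} (H : SimpleGraph V) : Prop :=
  ∀ i a b c, H.Adj i a → H.Adj i b → H.Adj i c → a = b ∨ a = c ∨ b = c

/-- At least `n` edges, stated as: fewer than `n` pairs never cover all edges. -/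
def EdgesGe {V : Type*} (H : SimpleGraph V) (n : ℕ) : Prop :=
  ∀ C : Finset (V × V), C.card < n → ∃ i j, H.Adj i j ∧ (i, j) ∉ C ∧ (j, i) ∉ C

lemma DegLeTwo.eq_or_eq (hdeg : DegLeTwo H) {a b c v : V} (hb : H.Adj a b) (hc : H.Adj a c)
    (hbc : b ≠ c) (hv : H.Adj a v) : v = b ∨ v = c := by
  rcases hdeg a v b c hv hb hc with h | h | h
  exacts [Or.inl h, Or.inr h, absurd h hbc]

/-- Two distinct edges can be oriented so that only their second and third endpoints may
coincide. -/
lemma exists_orient {P : V → Prop} {u v w x : V} (huv : H.Adj u v) (hwx : H.Adj w x)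
    (hu : P u) (hv : P v) (hw : P w) (hx : P x) (h1 : (w, x) ≠ (u, v)) (h2 : (x, w) ≠ (u, v)) :
    ∃ u' v' w' x', H.Adj u' v' ∧ H.Adj w' x' ∧ P u' ∧ P v' ∧ P w' ∧ P x' ∧
      u' ≠ w' ∧ u' ≠ x' ∧ v' ≠ x' := by
  simp only [ne_eq, Prod.mk.injEq, not_and] at h1 h2
  have e1 := huv.ne
  have e2 := hwx.ne
  by_cases c1 : v = w
  · subst c1
    exact ⟨u, v, v, x, huv, hwx, hu, hv, hw, hx, e1, fun h => h2 h.symm rfl, e2⟩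
  by_cases c2 : v = x
  · subst c2
    exact ⟨u, v, v, w, huv, hwx.symm, hu, hv, hx, hw, e1, fun h => h1 h.symm rfl, e2.symm⟩
  by_cases c3 : u = w
  · subst c3
    exact ⟨v, u, u, x, huv.symm, hwx, hv, hu, hw, hx, c1, c2, e2⟩
  · exact ⟨v, u, x, w, huv.symm, hwx.symm, hv, hu, hx, hw, c2, c1, c3⟩

lemma exists_label_triangle [DecidableEq V] (hdeg : DegLeTwo H) (hE : EdgesGe H 5) {a b c : V}
    (hab : H.Adj a b) (hbc : H.Adj b c) (hca : H.Adj c a) :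
    ∃ f : V → Option (Fin 6), LabelsEdges H f [(0, 1), (1, 2), (0, 2), (3, 4), (4, 5)] := by
  obtain ⟨u, v, huv, h1, h2⟩ := hE {(a, b), (b, c), (c, a)}
    (Finset.card_le_three.trans_lt (by norm_num))
  obtain ⟨w, x, hwx, h3, h4⟩ := hE {(a, b), (b, c), (c, a), (u, v)}
    (Finset.card_le_four.trans_lt (by norm_num))
  have ne1 := hab.ne
  have ne2 := hbc.ne
  have ne3 := hca.ne
  -- an edge other than those of the triangle avoids its vertices
  have hav : ∀ u v, H.Adj u v → (u, v) ∉ ({(a, b), (b, c), (c, a)} : Finset (V × V)) →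
      (v, u) ∉ ({(a, b), (b, c), (c, a)} : Finset (V × V)) → u ≠ a ∧ u ≠ b ∧ u ≠ c := by
    intro u v huv g1 g2
    refine ⟨?_, ?_, ?_⟩ <;> rintro rfl
    · rcases hdeg.eq_or_eq hab hca.symm ne2 huv with rfl | rfl
      exacts [g1 (by simp), g2 (by simp)]
    · rcases hdeg.eq_or_eq hbc hab.symm ne3 huv with rfl | rfl
      exacts [g1 (by simp), g2 (by simp)]
    · rcases hdeg.eq_or_eq hca hbc.symm ne1 huv with rfl | rfl
      exacts [g1 (by simp), g2 (by simp)]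
  have hsub : ({(a, b), (b, c), (c, a)} : Finset (V × V)) ⊆ {(a, b), (b, c), (c, a), (u, v)} := by
    intro e he
    simp only [Finset.mem_insert, Finset.mem_singleton] at he ⊢
    tauto
  have hu := hav u v huv h1 h2
  have hv := hav v u huv.symm h2 h1
  have hw := hav w x hwx (fun h => h3 (hsub h)) (fun h => h4 (hsub h))
  have hx := hav x w hwx.symm (fun h => h4 (hsub h)) (fun h => h3 (hsub h))
  obtain ⟨u', v', w', x', huv', hwx', hu', hv', hw', hx', n1, n2, n3⟩ :=
    exists_orient (P := fun i => i ≠ a ∧ i ≠ b ∧ i ≠ c) huv hwx hu hv hw hx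
      (fun h => h3 (by simp [h])) (fun h => h4 (by simp [h]))
  have e1 := huv'.ne
  have e2 := hwx'.ne
  let f : V → Option (Fin 6) := fun i => if i = a then some 0 else if i = b then some 1 else
    if i = c then some 2 else if i = u' then some 3 else if i = x' then some 5 else
    if i = v' ∨ i = w' then some 4 else none
  have fa : f a = some 0 := by simp [f]
  have fb : f b = some 1 := by simp [f, ne1.symm]
  have fc : f c = some 2 := by simp [f, ne2.symm, ne3]
  have fu : f u' = some 3 := by simp [f, hu']
  have fv : f v' = some 4 := by simp [f, hv', e1.symm, n3]
  have fw : f w' = some 4 := by simp [f, hw', n1.symm, e2]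
  have fx : f x' = some 5 := by simp [f, hx', n2.symm]
  refine ⟨f, fun i hi => ?_, fun e he => ?_⟩
  · simp only [f] at hi
    split_ifs at hi with c1 c2 c3 c4 c5 c6
    · exact ⟨b, c1 ▸ hab⟩
    · exact ⟨c, c2 ▸ hbc⟩
    · exact ⟨a, c3 ▸ hca⟩
    · exact ⟨v', c4 ▸ huv'⟩
    · exact ⟨w', c5 ▸ hwx'.symm⟩
    · rcases c6 with rfl | rfl
      exacts [⟨u', huv'.symm⟩, ⟨x', hwx'⟩]
    · exact absurd rfl hi
  · simp only [List.mem_cons, List.not_mem_nil, or_false] at he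
    rcases he with rfl | rfl | rfl | rfl | rfl
    exacts [⟨a, b, hab, fa, fb⟩, ⟨b, c, hbc, fb, fc⟩, ⟨a, c, hca.symm, fa, fc⟩,
      ⟨u', v', huv', fu, fv⟩, ⟨w', x', hwx', fw, fx⟩]

lemma exists_label_square [DecidableEq V] (hdeg : DegLeTwo H) (hE : EdgesGe H 5) {a b c d : V}
    (hab : H.Adj a b) (hbc : H.Adj b c) (hcd : H.Adj c d) (hda : H.Adj d a) (hac : a ≠ c)
    (hbd : b ≠ d) :
    ∃ f : V → Option (Fin 6), LabelsEdges H f [(4, 5)] ∧ f a = some 0 ∧ f b = some 1 ∧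
      f c = some 2 ∧ f d = some 3 := by
  obtain ⟨u, v, huv, h1, h2⟩ := hE {(a, b), (b, c), (c, d), (d, a)}
    (Finset.card_le_four.trans_lt (by norm_num))
  -- an edge other than those of the square avoids its vertices
  have hav : ∀ u v, H.Adj u v → (u, v) ∉ ({(a, b), (b, c), (c, d), (d, a)} : Finset (V × V)) →
      (v, u) ∉ ({(a, b), (b, c), (c, d), (d, a)} : Finset (V × V)) →
      u ≠ a ∧ u ≠ b ∧ u ≠ c ∧ u ≠ d := by
    intro u v huv g1 g2
    refine ⟨?_, ?_, ?_, ?_⟩ <;> rintro rfl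
    · rcases hdeg.eq_or_eq hab hda.symm hbd huv with rfl | rfl
      exacts [g1 (by simp), g2 (by simp)]
    · rcases hdeg.eq_or_eq hbc hab.symm hac.symm huv with rfl | rfl
      exacts [g1 (by simp), g2 (by simp)]
    · rcases hdeg.eq_or_eq hcd hbc.symm hbd.symm huv with rfl | rfl
      exacts [g1 (by simp), g2 (by simp)]
    · rcases hdeg.eq_or_eq hda hcd.symm hac huv with rfl | rfl
      exacts [g1 (by simp), g2 (by simp)]
  have hu := hav u v huv h1 h2
  have hv := hav v u huv.symm h2 h1
  let f : V → Option (Fin 6) := fun i => if i = a then some 0 else if i = b then some 1 else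
    if i = c then some 2 else if i = d then some 3 else if i = u then some 4 else
    if i = v then some 5 else none
  refine ⟨f, ⟨fun i hi => ?_, fun e he => ?_⟩, ?_, ?_, ?_, ?_⟩
  · simp only [f] at hi
    split_ifs at hi with c1 c2 c3 c4 c5 c6
    · exact ⟨b, c1 ▸ hab⟩
    · exact ⟨c, c2 ▸ hbc⟩
    · exact ⟨d, c3 ▸ hcd⟩
    · exact ⟨a, c4 ▸ hda⟩
    · exact ⟨v, c5 ▸ huv⟩
    · exact ⟨u, c6 ▸ huv.symm⟩
    · exact absurd rfl hi
  · simp only [List.mem_cons, List.not_mem_nil, or_false] at he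
    subst he
    exact ⟨u, v, huv, by simp [f, hu], by simp [f, hv, huv.ne']⟩
  · simp [f]
  · simp [f, hab.ne']
  · simp [f, hac.symm, hbc.ne']
  · simp [f, hda.ne, hbd.symm, hcd.ne']

/-- Walk away from `u` without turning back, outside a set `T` closed under adjacency. Either the
walk ends at a leaf, or it runs through five edges, which can be wrapped around a pentagon. -/
lemma exists_leaf_or_pentagon [DecidableEq V]
    (h3 : ∀ a b c, H.Adj a b → H.Adj b c → ¬ H.Adj c a)
    (h4 : ∀ a b c d, H.Adj a b → H.Adj b c → H.Adj c d → a ≠ c → b ≠ d → ¬ H.Adj d a)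
    {T : Finset V} (hT : ∀ v ∈ T, ∀ w, H.Adj v w → w ∈ T) {u v : V} (huv : H.Adj u v)
    (hu : u ∉ T) :
    (∃ l m, l ∉ T ∧ H.Adj l m ∧ ∀ w, H.Adj l w → w = m) ∨
    ∃ f : V → Option (Fin 5), LabelsEdges H f [(0, 1), (1, 2), (2, 3), (3, 4), (4, 0)] := by
  by_cases hcon : ∃ l m, l ∉ T ∧ H.Adj l m ∧ ∀ w, H.Adj l w → w = m
  · exact Or.inl hcon
  right
  push Not at hcon
  have hout : ∀ a b, H.Adj a b → a ∉ T → b ∉ T := fun a b hab ha hb => ha (hT b hb a hab.symm)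
  have hv := hout _ _ huv hu
  obtain ⟨w, hvw, hwu⟩ := hcon v u hv huv.symm
  have hw := hout _ _ hvw hv
  obtain ⟨x, hwx, hxv⟩ := hcon w v hw hvw.symm
  have hx := hout _ _ hwx hw
  obtain ⟨y, hxy, hyw⟩ := hcon x w hx hwx.symm
  have hy := hout _ _ hxy hx
  obtain ⟨z, hyz, hzx⟩ := hcon y x hy hxy.symm
  have hxu : x ≠ u := by rintro rfl; exact h3 _ _ _ huv hvw hwx
  have hyv : y ≠ v := by rintro rfl; exact h3 _ _ _ hvw hwx hxy
  have hyu : y ≠ u := by rintro rfl; exact h4 _ _ _ _ huv hvw hwx hwu.symm hxv.symm hxy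
  have hzw : z ≠ w := by rintro rfl; exact h3 _ _ _ hwx hxy hyz
  have hzv : z ≠ v := by rintro rfl; exact h4 _ _ _ _ hvw hwx hxy hxv.symm hyw.symm hyz
  have n1 := huv.ne
  have n2 := hvw.ne
  have n3 := hwx.ne
  have n4 := hxy.ne
  have n5 := hyz.ne
  let f : V → Option (Fin 5) := fun i => if i = u ∨ i = z then some 0 else if i = v then some 1 else
    if i = w then some 2 else if i = x then some 3 else if i = y then some 4 else none
  have fu : f u = some 0 := by simp [f]
  have fv : f v = some 1 := by simp [f, n1.symm, hzv.symm]
  have fw : f w = some 2 := by simp [f, hwu, hzw.symm, n2.symm]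
  have fx : f x = some 3 := by simp [f, hxu, hzx.symm, hxv, n3.symm]
  have fy : f y = some 4 := by simp [f, hyu, n5, hyv, hyw, n4.symm]
  have fz : f z = some 0 := by simp [f]
  refine ⟨f, fun i hi => ?_, fun e he => ?_⟩
  · simp only [f] at hi
    split_ifs at hi with c1 c2 c3 c4 c5
    · rcases c1 with rfl | rfl
      exacts [⟨v, huv⟩, ⟨y, hyz.symm⟩]
    · exact ⟨w, c2 ▸ hvw⟩
    · exact ⟨x, c3 ▸ hwx⟩
    · exact ⟨y, c4 ▸ hxy⟩
    · exact ⟨z, c5 ▸ hyz⟩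
    · exact absurd rfl hi
  · simp only [List.mem_cons, List.not_mem_nil, or_false] at he
    rcases he with rfl | rfl | rfl | rfl | rfl
    exacts [⟨_, _, huv, fu, fv⟩, ⟨_, _, hvw, fv, fw⟩, ⟨_, _, hwx, fw, fx⟩, ⟨_, _, hxy, fx, fy⟩,
      ⟨_, _, hyz, fy, fz⟩]

/-- A stage in laying the paths of `H` end to end: the vertices of `T` carry labels `f`, the edges
inside `T` (covered by `C`) are labelled `(0, 1), …, (n - 1, n)`, and only the current
vertex `b` may have a neighbour outside `T`, and at most one. -/
structure Chain {V : Type*} (H : SimpleGraph V) (n : ℕ) (f : V → ℕ) (T : Finset V) (b : V)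
    (C : Finset (V × V)) : Prop where
  /-- every pair of consecutive labels is used -/
  label : ∀ t < n, ∃ i ∈ T, ∃ j ∈ T, H.Adj i j ∧ f i = t ∧ f j = t + 1
  /-- only `b` has neighbours outside `T` -/
  closed : ∀ v ∈ T, v ≠ b → ∀ w, H.Adj v w → w ∈ T
  /-- `b` has at most one neighbour outside `T` -/
  unique : b ∈ T → ∀ w w', H.Adj b w → H.Adj b w' → w ∉ T → w' ∉ T → w = w'
  /-- the label of the current vertex -/
  cur : b ∈ T → f b = n
  /-- there are at most `n` edges inside `T` -/
  card : C.card ≤ n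
  /-- `C` covers the edges inside `T` -/
  cover : ∀ i ∈ T, ∀ j ∈ T, H.Adj i j → (i, j) ∈ C ∨ (j, i) ∈ C
  /-- every labelled vertex other than `b` has a neighbour -/
  nbr : ∀ v ∈ T, v ≠ b → ∃ w, H.Adj v w

lemma Chain.extend [DecidableEq V] (hdeg : DegLeTwo H) {n : ℕ} {f : V → ℕ} {T : Finset V} {b c : V}
    {C : Finset (V × V)} (h : Chain H n f T b C) (hb : b ∈ T) (hbc : H.Adj b c) (hc : c ∉ T) :
    Chain H (n + 1) (Function.update f c (n + 1)) (insert c T) c (insert (b, c) C) := by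
  have hne : ∀ i ∈ T, i ≠ c := fun i hi h => hc (h ▸ hi)
  refine ⟨fun t ht => ?_, fun v hv hvc w hvw => ?_, fun _ w w' hw hw' hwT hwT' => ?_, fun _ => ?_,
    ?_, fun i hi j hj hij => ?_, fun v hv hvc => ?_⟩
  · rcases Nat.lt_succ_iff_lt_or_eq.1 ht with ht | rfl
    · obtain ⟨i, hi, j, hj, hij, h1, h2⟩ := h.label t ht
      refine ⟨i, by simp [hi], j, by simp [hj], hij, ?_, ?_⟩
      · rw [Function.update_of_ne (hne i hi), h1]
      · rw [Function.update_of_ne (hne j hj), h2]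
    · refine ⟨b, by simp [hb], c, by simp, hbc, ?_, by simp⟩
      rw [Function.update_of_ne (hne b hb), h.cur hb]
  · have hvT := (Finset.mem_insert.1 hv).resolve_left hvc
    by_cases hvb : v = b
    · subst hvb
      by_cases hwT : w ∈ T
      · simp [hwT]
      · simp [h.unique hb w c hvw hbc hwT hc]
    · simp [h.closed v hvT hvb w hvw]
  · simp only [Finset.mem_insert, not_or] at hwT hwT'
    rcases hdeg c b w w' hbc.symm hw hw' with rfl | rfl | h1
    · exact absurd hb hwT.2
    · exact absurd hb hwT'.2
    · exact h1
  · simp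
  · exact (Finset.card_insert_le _ _).trans (Nat.succ_le_succ h.card)
  · rcases Finset.mem_insert.1 hi with rfl | hiT
    · rcases Finset.mem_insert.1 hj with rfl | hjT
      · exact absurd hij (H.loopless.irrefl _)
      · by_cases hjb : j = b
        · simp [hjb]
        · exact absurd (h.closed j hjT hjb _ hij.symm) hc
    · rcases Finset.mem_insert.1 hj with rfl | hjT
      · by_cases hib : i = b
        · simp [hib]
        · exact absurd (h.closed i hiT hib _ hij) hc
      · have := h.cover i hiT j hjT hij
        simp only [Finset.mem_insert]
        tauto
  · have hvT := (Finset.mem_insert.1 hv).resolve_left hvc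
    by_cases hvb : v = b
    · exact ⟨c, hvb ▸ hbc⟩
    · exact h.nbr v hvT hvb

lemma exists_label_pentagon [DecidableEq V] (hdeg : DegLeTwo H) (hE : EdgesGe H 5)
    (h3 : ∀ a b c, H.Adj a b → H.Adj b c → ¬ H.Adj c a)
    (h4 : ∀ a b c d, H.Adj a b → H.Adj b c → H.Adj c d → a ≠ c → b ≠ d → ¬ H.Adj d a) :
    ∃ f : V → Option (Fin 5), LabelsEdges H f [(0, 1), (1, 2), (2, 3), (3, 4), (4, 0)] := by
  by_contra hcon
  have key : ∀ n ≤ 5, ∃ f T b C, Chain H n f T b C ∧ (b ∈ T → ∃ w, H.Adj b w) := by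
    intro n
    induction n with
    | zero =>
      intro _
      obtain ⟨i, j, hij, -, -⟩ := hE ∅ (by simp)
      refine ⟨fun _ => 0, ∅, i, ∅, ⟨by simp, by simp, by simp, by simp, by simp,
        by simp, by simp⟩, by simp⟩
    | succ n ih =>
      intro hn
      obtain ⟨f, T, b, C, hch, hbn⟩ := ih (by omega)
      by_cases hb : ∃ c, b ∈ T ∧ H.Adj b c ∧ c ∉ T
      · obtain ⟨c, hbT, hbc, hc⟩ := hb
        exact ⟨_, _, _, _, hch.extend hdeg hbT hbc hc, fun _ => ⟨b, hbc.symm⟩⟩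
      · push Not at hb
        have hT : ∀ v ∈ T, ∀ w, H.Adj v w → w ∈ T := by
          intro v hv w hvw
          by_cases hvb : v = b
          · subst hvb; exact hb w hv hvw
          · exact hch.closed v hv hvb w hvw
        obtain ⟨u, v, huv, hu1, hu2⟩ := hE C (by have := hch.card; omega)
        have hu : u ∉ T := by
          intro hu
          have := hch.cover u hu v (hT u hu v huv) huv
          tauto
        obtain ⟨l, m, hl, hlm, hlw⟩ :=
          (exists_leaf_or_pentagon h3 h4 hT huv hu).resolve_right hcon
        have hne : ∀ i ∈ T, i ≠ l := fun i hi h => hl (h ▸ hi)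
        -- start a new path at the leaf `l`
        have hch' : Chain H n (Function.update f l n) (insert l T) l C := by
          refine ⟨fun t ht => ?_, fun v hv hvl w hvw => ?_, fun _ w w' hw hw' _ _ => ?_, fun _ => ?_,
            hch.card, fun i hi j hj hij => ?_, fun v hv hvl => ?_⟩
          · obtain ⟨i, hi, j, hj, hij, h1, h2⟩ := hch.label t ht
            refine ⟨i, by simp [hi], j, by simp [hj], hij, ?_, ?_⟩
            · rw [Function.update_of_ne (hne i hi), h1]
            · rw [Function.update_of_ne (hne j hj), h2]
          · have hvT := (Finset.mem_insert.1 hv).resolve_left hvl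
            simp [hT v hvT w hvw]
          · rw [hlw w hw, hlw w' hw']
          · simp
          · rcases Finset.mem_insert.1 hi with rfl | hiT
            · rcases Finset.mem_insert.1 hj with rfl | hjT
              · exact absurd hij (H.loopless.irrefl _)
              · exact absurd (hT j hjT _ hij.symm) hl
            · exact hch.cover i hiT j (hT i hiT j hij) hij
          · have hvT := (Finset.mem_insert.1 hv).resolve_left hvl
            by_cases hvb : v = b
            · exact hvb ▸ hbn (hvb ▸ hvT)
            · exact hch.nbr v hvT hvb
        have hm : m ∉ insert l T := by
          rw [Finset.mem_insert, not_or]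
          exact ⟨hlm.ne', fun hm => hl (hT m hm l hlm.symm)⟩
        exact ⟨_, _, _, _, hch'.extend hdeg (by simp) hlm hm, fun _ => ⟨l, hlm.symm⟩⟩
  obtain ⟨f, T, b, C, hch, hbn⟩ := key 5 le_rfl
  refine hcon ⟨fun i => if i ∈ T then some (Fin.ofNat 5 (f i)) else none, fun i hi => ?_,
    fun e he => ?_⟩
  · have hiT : i ∈ T := by
      by_contra h
      simp [h] at hi
    by_cases hib : i = b
    · exact hib ▸ hbn (hib ▸ hiT)
    · exact hch.nbr i hiT hib
  · have hlab : ∀ t < 5, ∃ i i', H.Adj i i' ∧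
        (if i ∈ T then some (Fin.ofNat 5 (f i)) else none) = some (Fin.ofNat 5 t) ∧
        (if i' ∈ T then some (Fin.ofNat 5 (f i')) else none) = some (Fin.ofNat 5 (t + 1)) := by
      intro t ht
      obtain ⟨i, hi, j, hj, hij, h1, h2⟩ := hch.label t ht
      exact ⟨i, j, hij, by simp [hi, h1], by simp [hj, h2]⟩
    simp only [List.mem_cons, List.not_mem_nil, or_false] at he
    rcases he with rfl | rfl | rfl | rfl | rfl
    exacts [hlab 0 (by norm_num), hlab 1 (by norm_num), hlab 2 (by norm_num),
      hlab 3 (by norm_num), hlab 4 (by norm_num)]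

end MaxDegreeTwo

/-! ### Circuits on at most `d + 4` vertices -/

section Assembly

variable {V : Type*} {d : ℕ} {G : SimpleGraph V} {S : Finset V}

/-- The complement of `G` inside the vertex set `S`. -/
def complIn {V : Type*} (G : SimpleGraph V) (S : Finset V) : SimpleGraph V where
  Adj i j := i ∈ S ∧ j ∈ S ∧ i ≠ j ∧ ¬ G.Adj i j
  symm := ⟨fun _ _ h => ⟨h.2.1, h.1, h.2.2.1.symm, fun h' => h.2.2.2 h'.symm⟩⟩
  loopless := ⟨fun _ h => h.2.2.1 rfl⟩

lemma LabelsEdges.realizes {m : ℕ} {f : V → Option (Fin m)} {L : List (Fin m × Fin m)}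
    (h : LabelsEdges (complIn G S) f L) : Realizes G f L := by
  intro e he
  obtain ⟨i, i', hii, h1, h2⟩ := h.2 e he
  exact ⟨i, i', hii.2.2.1, hii.2.2.2, h1, h2⟩

lemma LabelsEdges.mem {m : ℕ} {f : V → Option (Fin m)} {L : List (Fin m × Fin m)}
    (h : LabelsEdges (complIn G S) f L) (i : V) (hi : f i ≠ none) : i ∈ S := by
  obtain ⟨j, hj⟩ := h.1 i hi
  exact hj.1

variable [Fintype V] [DecidableEq V]

lemma IsCircuitGraph.edgesGe (hcirc : IsCircuitGraph d G) {a b : V} (hab : G.Adj a b)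
    {k : ℕ} (hcard : S.card = d + 1 + k) : EdgesGe (complIn G S) ((k + 1).choose 2 - 1) := by
  intro C hC
  by_contra! h
  have := hcirc.choose_le_card hab hcard (C := C) fun i hi j hj hij hG => by
    by_cases hm : (i, j) ∈ C
    · exact Or.inl hm
    · exact Or.inr (h i j ⟨hi, hj, hij, hG⟩ hm)
  omega

/-- A vertex of `S` misses at most `k - 1` other vertices of `S`. -/
lemma IsCircuitGraph.card_nonadj (hcirc : IsCircuitGraph d G) (hS : ∀ i j, G.Adj i j → i ∈ S)
    (hS' : ∀ i ∈ S, ∃ j, G.Adj i j) {k : ℕ} (hcard : S.card = d + 1 + k) {i : V} {T : Finset V}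
    (hT : ∀ t ∈ T, (complIn G S).Adj i t) (hi : i ∈ S) : T.card + 1 ≤ k := by
  obtain ⟨j, hij⟩ := hS' i hi
  have := hcirc.card_support hS hij (T := T) (fun t ht => (hT t ht).2.1)
    fun t ht => ⟨(hT t ht).2.2.1.symm, (hT t ht).2.2.2⟩
  omega

lemma IsCircuitGraph.generic_psd_two (hcirc : IsCircuitGraph d G)
    (hS : ∀ i j, G.Adj i j → i ∈ S) (hS' : ∀ i ∈ S, ∃ j, G.Adj i j)
    (hcard : S.card = d + 1 + 2) {x y : V} (hxy : G.Adj x y) :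
    ∃ p : V → EuclideanSpace ℝ (Fin d), Generic p ∧
      ∃ ω, IsEqStress G p ω ∧ (stressMatrix ω).PosSemidef ∧ ω ≠ 0 := by
  have hE : EdgesGe (complIn G S) 2 := hcirc.edgesGe hxy hcard
  obtain ⟨a, b, hab, -, -⟩ := hE ∅ (by simp)
  obtain ⟨c, e, hce, h1, h2⟩ := hE {(a, b)} (by simp)
  simp only [Finset.mem_singleton, Prod.mk.injEq, not_and] at h1 h2
  -- no vertex is missed by two others
  have hone : ∀ i u v, (complIn G S).Adj i u → (complIn G S).Adj i v → u = v := by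
    intro i u v hu hv
    by_contra huv
    have := hcirc.card_nonadj hS hS' hcard (T := {u, v}) (i := i) (by
      intro t ht
      simp only [Finset.mem_insert, Finset.mem_singleton] at ht
      rcases ht with rfl | rfl
      exacts [hu, hv]) hu.1
    rw [Finset.card_pair huv] at this
    omega
  have hca : c ≠ a := by rintro rfl; exact h1 rfl (hone _ _ _ hce hab)
  have hcb : c ≠ b := by rintro rfl; exact h2 (hone _ _ _ hce hab.symm) rfl
  have hea : e ≠ a := by rintro rfl; exact h2 rfl (hone _ _ _ hce.symm hab)
  have heb : e ≠ b := by rintro rfl; exact h1 (hone _ _ _ hce.symm hab.symm) rfl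
  let f : V → Option (Fin 4) := fun i => if i = a then some 0 else if i = b then some 1 else
    if i = c then some 2 else if i = e then some 3 else none
  refine generic_psd_two_edges hS hcard hcirc.1 f (fun i hi => ?_) fun e' he => ?_
  · simp only [f] at hi
    split_ifs at hi with c1 c2 c3 c4
    exacts [c1 ▸ hab.1, c2 ▸ hab.2.1, c3 ▸ hce.1, c4 ▸ hce.2.1, absurd rfl hi]
  · simp only [List.mem_cons, List.not_mem_nil, or_false] at he
    rcases he with rfl | rfl
    · exact ⟨a, b, hab.2.2.1, hab.2.2.2, by simp [f], by simp [f, hab.ne']⟩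
    · exact ⟨c, e, hce.2.2.1, hce.2.2.2, by simp [f, hca, hcb], by simp [f, hea, heb, hce.ne']⟩

lemma IsCircuitGraph.generic_psd_three (hcirc : IsCircuitGraph d G)
    (hS : ∀ i j, G.Adj i j → i ∈ S) (hS' : ∀ i ∈ S, ∃ j, G.Adj i j)
    (hcard : S.card = d + 1 + 3) {x y : V} (hxy : G.Adj x y) :
    ∃ p : V → EuclideanSpace ℝ (Fin d), Generic p ∧
      ∃ ω, IsEqStress G p ω ∧ (stressMatrix ω).PosSemidef ∧ ω ≠ 0 := by
  have hE : EdgesGe (complIn G S) 5 := hcirc.edgesGe hxy hcard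
  have hdeg : DegLeTwo (complIn G S) := by
    intro i a b c ha hb hc
    by_contra! h
    have := hcirc.card_nonadj hS hS' hcard (T := {a, b, c}) (i := i) (by
      intro t ht
      simp only [Finset.mem_insert, Finset.mem_singleton] at ht
      rcases ht with rfl | rfl | rfl
      exacts [ha, hb, hc]) ha.1
    rw [Finset.card_eq_three.2 ⟨a, b, c, h.1, h.2.1, h.2.2, rfl⟩] at this
    omega
  by_cases h3 : ∃ a b c, (complIn G S).Adj a b ∧ (complIn G S).Adj b c ∧ (complIn G S).Adj c a
  · obtain ⟨a, b, c, hab, hbc, hca⟩ := h3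
    obtain ⟨f, hf⟩ := exists_label_triangle hdeg hE hab hbc hca
    exact generic_psd_triangle hS hcard hcirc.1 f hf.mem hf.realizes
  by_cases h4 : ∃ a b c e, (complIn G S).Adj a b ∧ (complIn G S).Adj b c ∧ (complIn G S).Adj c e ∧
      (complIn G S).Adj e a ∧ a ≠ c ∧ b ≠ e
  · obtain ⟨a, b, c, e, hab, hbc, hce, hea, hac, hbe⟩ := h4
    obtain ⟨f, hf, h0, h1, h2, h3⟩ := exists_label_square hdeg hE hab hbc hce hea hac hbe
    have hv : Function.Injective ![a, b, c, e] := by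
      have n1 := hab.ne
      have n2 := hbc.ne
      have n3 := hce.ne
      have n4 := hea.ne
      intro i j hij
      fin_cases i <;> fin_cases j <;> simp_all
    exact generic_psd_square hS hcard hcirc.1 f hf.mem hv hab.2.2.2 hbc.2.2.2 hce.2.2.2 hea.2.2.2
      h0 h1 h2 h3 hf.realizes
  · push Not at h3 h4
    obtain ⟨f, hf⟩ := exists_label_pentagon hdeg hE h3
      (fun a b c e hab hbc hce hac hbe hea => hbe (h4 a b c e hab hbc hce hea hac))
    exact generic_psd_pentagon hS hcard hcirc.1 f hf.mem hf.realizes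

/-- A `d`-circuit on at most `d + 4` vertices has a generic framework in `ℝ^d` with a nonzero PSD
equilibrium stress. -/
lemma IsCircuitGraph.exists_generic_psd (hcirc : IsCircuitGraph d G)
    (hcard : Fintype.card V ≤ d + 4) :
    ∃ p : V → EuclideanSpace ℝ (Fin d), Generic p ∧
      ∃ ω, IsEqStress G p ω ∧ (stressMatrix ω).PosSemidef ∧ ω ≠ 0 := by
  classical
  -- restrict to the non-isolated vertices
  obtain ⟨S, hSdef⟩ : ∃ S : Finset V, ∀ i, i ∈ S ↔ ∃ j, G.Adj i j :=
    ⟨Finset.univ.filter fun i => ∃ j, G.Adj i j, by simp⟩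
  have hS : ∀ i j, G.Adj i j → i ∈ S := fun i j h => (hSdef i).2 ⟨j, h⟩
  have hS' : ∀ i ∈ S, ∃ j, G.Adj i j := fun i h => (hSdef i).1 h
  obtain ⟨x, y, hxy⟩ : ∃ x y, G.Adj x y := by
    by_contra! h
    refine hcirc.1 fun p _ ω hω => ?_
    funext i j
    exact hω.2.1 i j (h i j)
  have h1 := hcirc.card_support hS hxy (T := ∅) (by simp) (by simp)
  rw [Finset.card_empty] at h1
  have h2 : S.card ≤ d + 4 := (Finset.card_le_univ S).trans hcard
  obtain hk | hk | hk : S.card = d + 1 + 1 ∨ S.card = d + 1 + 2 ∨ S.card = d + 1 + 3 := by omega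
  · exact generic_psd_rank_one hS hk hcirc.1
  · exact hcirc.generic_psd_two hS hS' hk hxy
  · exact hcirc.generic_psd_three hS hS' hk hxy

end Assembly

/-- Let d ≥ 1 and let G be a d-circuit with at most d+4 vertices.
Then mlt(G) ≥ d+2. -/
theorem mlt_ge_of_small_circuit {V : Type*} [Fintype V] [DecidableEq V]
    (d : ℕ) (hd : 1 ≤ d) (G : SimpleGraph V)
    (hcirc : IsCircuitGraph d G) (hcard : Fintype.card V ≤ d + 4) :
    d + 2 ≤ mlt G := by
  obtain ⟨p, hp, ω, hω, hpsd, h0⟩ := hcirc.exists_generic_psd hcard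
  exact le_mlt_of_generic_psd hp hω hpsd h0
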